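/- arXiv:2107.06198 — 3 statements merged into one kernel-verified Lean document; each statement's English description precedes it below -/
import Mathlib

section
/- Let G be a finite group, H a normal subgroup of G, and 1 < c ≤ 2 a real constant. If E(H) ≤ c|H| − 1, then E(G) ≤ c|G| − 1, where E(·) is the smallest t such that every sequence of t elements contains a product-one subsequence of length equal to the group order. -/
/-- A multiset `T` over a group is a product-one sequence if its terms can be
ordered so that their product is the identity. -/
def IsProdOne {G : Type*} [Group G] (T : Multiset G) : Prop :=
  ∃ l : List G, (l : Multiset G) = T ∧ l.prod = 1

/-- `S` has a product-one subsequence of length `n`. -/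
def HasProdOneSubseqOfLen {G : Type*} [Group G] (S : Multiset G) (n : ℕ) : Prop :=
  ∃ T ≤ S, Multiset.card T = n ∧ IsProdOne T

/-- `EGZconst G` is the smallest `t` such that every sequence of `t` elements
of `G` has a product-one subsequence of length `|G|`. -/
noncomputable def EGZconst (G : Type*) [Group G] : ℕ :=
  sInf {t | ∀ S : Multiset G, Multiset.card S = t →
    HasProdOneSubseqOfLen S (Nat.card G)}

/-!
Olson's theorem `E(G) ≤ 2|G| - 1` is the core of the argument. Among `2|G| - 1` terms choose a
minimal subgroup `K` one of whose cosets `cK`, with `c` normalizing `K`, holds `|G| + |K| - 1` of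
them. If half-length products of at most `2|K| - 2` of these terms fill a coset of `K`, then `|G|`
terms with product one arise by fixing a product of enough of the remaining terms and completing it
with such a half-length product.

To fill the coset, extend a set `X` of half-length products by pairs of terms `a, w`, passing to
`aX ∪ wX ∪ Xa`. When this set is never larger than `X`, the element `a` normalizes the left
stabilizer of `X` and all remaining terms lie in the coset of `a`: many terms concentrate on a
smaller subgroup `M < K`. Take `M` with as much concentration as possible, so that its coset `bM`
does get filled by few of the terms in it. By the minimality of `K` many terms lie outside `bM`, and
pairing terms inside with terms outside enlarges `X` by a full coset of `M` each time. This gains so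
much that a final run cannot get stuck without contradicting the choice of `M`.

For a normal subgroup `H`, Olson's theorem in `G ⧸ H` extracts from `(E(H) + 1)[G : H] - 1` terms
of `G` as many as `E(H)` disjoint blocks of `[G : H]` terms with product in `H`. By definition of
`E(H)`, some `|H|` of these blocks, suitably ordered, have product one.
-/

open Multiset
open scoped Pointwise RightActions

section Multiset

variable {α β : Type*}

theorem exists_multiset_le_card_eq {s : Multiset α} {k : ℕ} (hk : k ≤ card s) :
    ∃ t ≤ s, card t = k := by
  have hpos : 0 < card (powersetCard k s) := by
    rw [card_powersetCard]
    exact Nat.choose_pos hk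
  simpa only [mem_powersetCard] using card_pos_iff_exists_mem.1 hpos

theorem exists_map_eq_of_coe_le_map {f : α → β} {l : List β} {s : Multiset α}
    (h : (l : Multiset β) ≤ s.map f) : ∃ l' : List α, (l' : Multiset α) ≤ s ∧ l'.map f = l := by
  induction l generalizing s with
  | nil => exact ⟨[], zero_le s, rfl⟩
  | cons b l ih =>
    obtain ⟨a, ha, rfl⟩ := mem_map.1 (mem_of_le h (mem_coe.2 List.mem_cons_self))
    obtain ⟨t, rfl⟩ := exists_cons_of_mem ha
    rw [map_cons, ← cons_coe, cons_le_cons_iff] at h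
    obtain ⟨l', hl', rfl⟩ := ih h
    exact ⟨a :: l', cons_le_cons a hl', rfl⟩

theorem add_cons_add_cons (a b : α) (s t u : Multiset α) :
    s + (a ::ₘ t + b ::ₘ u) = a ::ₘ b ::ₘ s + (t + u) := by
  simp only [add_cons, cons_add, cons_swap b a]

/-- `R` is `s`-spread if discarding all copies of any single term leaves at least `s` terms. -/
def IsSpread [DecidableEq α] (R : Multiset α) (s : ℕ) : Prop :=
  ∀ x, s + R.count x ≤ card R

variable [DecidableEq α] {R : Multiset α} {s : ℕ}

theorem IsSpread.mono {s' : ℕ} (h : IsSpread R s) (hs : s' ≤ s) : IsSpread R s' :=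
  fun x ↦ (Nat.add_le_add_right hs _).trans (h x)

theorem IsSpread.exists_mem_ne (h : IsSpread R s) (hs : 0 < s) (a : α) : ∃ w ∈ R, w ≠ a := by
  by_contra! hall
  have := h a
  rw [count_eq_card.2 fun x hx ↦ (hall x hx).symm] at this
  omega

theorem count_add_count_le_card {x y : α} (hxy : x ≠ y) : R.count x + R.count y ≤ card R := by
  induction R using Multiset.induction_on with
  | empty => rfl
  | cons z R ih =>
    rw [count_cons, count_cons, card_cons]
    by_cases hxz : x = z
    · have hyz : y ≠ z := fun hyz ↦ hxy (hxz.trans hyz.symm)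
      rw [if_pos hxz, if_neg hyz]
      omega
    · split_ifs <;> omega

theorem exists_mem_forall_two_mul_count_le_card (hR : R ≠ 0) :
    ∃ a ∈ R, ∀ x ≠ a, 2 * R.count x ≤ card R := by
  obtain ⟨a, ha, hmax⟩ :=
    R.toFinset.exists_max_image R.count (toFinset_nonempty.2 hR)
  refine ⟨a, mem_toFinset.1 ha, fun x hxa ↦ ?_⟩
  by_cases hx : x ∈ R
  · have := hmax x (mem_toFinset.2 hx)
    have := count_add_count_le_card (R := R) hxa
    omega
  · simp only [count_eq_zero.2 hx, mul_zero, Nat.zero_le]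

theorem IsSpread.of_cons_cons {a w : α} (h : IsSpread (a ::ₘ w ::ₘ R) (s + 1))
    (hcard : 2 * s < card R)
    (ha : ∀ x ≠ a, 2 * (a ::ₘ w ::ₘ R).count x ≤ card (a ::ₘ w ::ₘ R)) : IsSpread R s := by
  intro x
  have hcount : R.count x ≤ (w ::ₘ R).count x := count_le_count_cons x w R
  by_cases hx : x = a
  · subst hx
    have := h x
    rw [count_cons_self, card_cons, card_cons] at this
    omega
  · have := ha x hx
    rw [count_cons_of_ne hx, card_cons, card_cons] at this
    omega

end Multiset

section Group

variable {G : Type*} [Group G]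

section Subgroup

variable {M N : Subgroup G} {X : Set G} {a g r t w : G}

theorem ncard_smul_coe (g : G) (N : Subgroup G) : (g • (N : Set G)).ncard = Nat.card N :=
  Set.ncard_smul_set g _

theorem smul_coe_eq_of_mem_normalizer (hg : g ∈ Subgroup.normalizer (N : Set G)) :
    g • (N : Set G) = (N : Set G) <• g := by
  ext x
  rw [mem_leftCoset_iff, mem_rightCoset_iff, SetLike.mem_coe, SetLike.mem_coe,
    Subgroup.mem_normalizer_iff.1 hg, mul_inv_cancel_left]

theorem mem_smul_iff_smul_eq : t ∈ r • (MulAction.stabilizer G X : Set G) ↔ t • X = r • X := by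
  rw [mem_leftCoset_iff, SetLike.mem_coe, MulAction.mem_stabilizer_iff, mul_smul,
    inv_smul_eq_iff]

theorem mem_normalizer_stabilizer (ha : a • X = X <• a) :
    a ∈ Subgroup.normalizer (MulAction.stabilizer G X : Set G) := by
  have hconj := MulAction.stabilizer_smul_eq_stabilizer_map_conj a X
  rw [ha, MulAction.stabilizer_smul_eq_right] at hconj
  exact Subgroup.mem_normalizer_iff_map_conj_eq.2 hconj.symm

theorem stabilizer_le_of_subset_smul (hg : g ∈ Subgroup.normalizer (N : Set G)) (hX : X.Nonempty)
    (hXN : X ⊆ g • (N : Set G)) : MulAction.stabilizer G X ≤ N := by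
  intro h hh
  obtain ⟨x, hx⟩ := hX
  rw [smul_coe_eq_of_mem_normalizer hg] at hXN
  have hhx := hXN ((MulAction.mem_stabilizer_set.1 hh x).2 hx)
  have := hXN hx
  rw [mem_rightCoset_iff] at this hhx
  rw [smul_eq_mul, mul_assoc] at hhx
  exact (N.mul_mem_cancel_right this).1 hhx

theorem card_dvd_ncard_of_mul_eq (hX : X * (M : Set G) = X) : Nat.card M ∣ X.ncard := by
  rw [← Nat.card_coe_set_eq, ← hX]
  exact ⟨_, Subgroup.card_mul_eq_card_subgroup_mul_card_quotient M X⟩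

theorem card_stabilizer_dvd_ncard (X : Set G) : Nat.card (MulAction.stabilizer G X) ∣ X.ncard := by
  rw [← Set.ncard_inv]
  apply card_dvd_ncard_of_mul_eq
  rw [← inv_coe_set, ← mul_inv_rev, MulAction.stabilizer_mul_self]

theorem add_le_of_dvd_of_lt {k m n : ℕ} (hm : k ∣ m) (hn : k ∣ n) (h : m < n) : m + k ≤ n :=
  ((Nat.modEq_zero_iff_dvd.2 hm).trans (Nat.modEq_zero_iff_dvd.2 hn).symm).add_le_of_lt h

/-- The union of the translates `a X`, `w X` and `X a`: if `X` consists of products of half of the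
terms of a sequence, this set consists of products of half of the terms of that sequence extended
by `a` and `w`. The fourth translate `X w` is not needed for growth. -/
def pairTranslates (X : Set G) (a w : G) : Set G :=
  a • X ∪ w • X ∪ X <• a

theorem eq_of_ncard_pairTranslates_le [Finite G]
    (h : (pairTranslates X a w).ncard ≤ X.ncard) : a • X = X <• a ∧ w • X = a • X := by
  have ha : a • X = pairTranslates X a w := Set.eq_of_subset_of_ncard_le
    (Set.subset_union_left.trans Set.subset_union_left) (by rwa [Set.ncard_smul_set])
  have hw : w • X = pairTranslates X a w := Set.eq_of_subset_of_ncard_le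
    (Set.subset_union_right.trans Set.subset_union_left) (by rwa [Set.ncard_smul_set])
  have ha' : X <• a = pairTranslates X a w := Set.eq_of_subset_of_ncard_le
    Set.subset_union_right (by rwa [Set.ncard_smul_set])
  exact ⟨ha.trans ha'.symm, hw.trans ha.symm⟩

theorem pairTranslates_mul_eq (ha : a ∈ Subgroup.normalizer (M : Set G)) (hX : X * (M : Set G) = X)
    (w : G) : pairTranslates X a w * (M : Set G) = pairTranslates X a w := by
  have hright : (X <• a) * (M : Set G) = X <• a := by
    rw [Set.op_smul_set_mul_eq_mul_smul_set, smul_coe_eq_of_mem_normalizer ha, mul_smul_comm, hX]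
  rw [pairTranslates, Set.union_mul, Set.union_mul, smul_mul_assoc, smul_mul_assoc, hX, hright]

end Subgroup

section HalfProds

variable {N : Subgroup G} {P R R' : Multiset G} {X : Set G} {a d : G} {C s : ℕ}

/-- The products, in every order, of the subsequences of `P` consisting of half of its terms. -/
def halfProds (P : Multiset G) : Set G :=
  {x | ∃ l : List G, (l : Multiset G) ≤ P ∧ 2 * l.length = card P ∧ l.prod = x}

theorem one_mem_halfProds_zero : (1 : G) ∈ halfProds (0 : Multiset G) :=
  ⟨[], le_rfl, rfl, rfl⟩

theorem pairTranslates_subset_halfProds (hX : X ⊆ halfProds P) (a w : G) :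
    pairTranslates X a w ⊆ halfProds (a ::ₘ w ::ₘ P) := by
  rintro _ ((⟨x, hx, rfl⟩ | ⟨x, hx, rfl⟩) | ⟨x, hx, rfl⟩) <;>
    obtain ⟨l, hl, hcard, rfl⟩ := hX hx
  · exact ⟨a :: l, cons_le_cons a (hl.trans (le_cons_self P w)), by simp [← hcard]; ring, by simp⟩
  · exact ⟨w :: l, (cons_le_cons w hl).trans (le_cons_self _ a), by simp [← hcard]; ring, by simp⟩
  · refine ⟨l ++ [a], ?_, by simp [← hcard]; ring, by simp⟩
    rw [← coe_add, add_comm, coe_singleton, singleton_add]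
    exact cons_le_cons a (hl.trans (le_cons_self P w))

/-- The terms of `R` all lie in the coset `d N` of `N`, where `d` normalizes `N`. -/
structure InNormalizedCoset (N : Subgroup G) (d : G) (R : Multiset G) : Prop where
  mem_normalizer : d ∈ Subgroup.normalizer (N : Set G)
  mem_smul : ∀ x ∈ R, x ∈ d • (N : Set G)

namespace InNormalizedCoset

theorem mono (h : InNormalizedCoset N d R) (hR : R' ≤ R) : InNormalizedCoset N d R' :=
  ⟨h.mem_normalizer, fun x hx ↦ h.mem_smul x (mem_of_le hR hx)⟩

theorem mem_normalizer_of_mem (h : InNormalizedCoset N d R) (ha : a ∈ R) :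
    a ∈ Subgroup.normalizer (N : Set G) := by
  obtain ⟨m, hm, rfl⟩ := h.mem_smul a ha
  exact mul_mem h.mem_normalizer (Subgroup.le_normalizer hm)

theorem prod_mem (h : InNormalizedCoset N d R) {l : List G} (hl : ∀ x ∈ l, x ∈ R) :
    l.prod ∈ d ^ l.length • (N : Set G) := by
  induction l with
  | nil => simp only [List.prod_nil, List.length_nil, pow_zero, one_smul, SetLike.mem_coe, one_mem]
  | cons x l ih =>
    obtain ⟨hx, hl⟩ := List.forall_mem_cons.1 hl
    obtain ⟨m, hm, hmx⟩ := h.mem_smul x hx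
    obtain ⟨k, hk, hprod⟩ := ih hl
    refine ⟨(d ^ l.length)⁻¹ * m * d ^ l.length * k, N.mul_mem ?_ hk, ?_⟩
    · exact (Subgroup.mem_normalizer_iff''.1 (pow_mem h.mem_normalizer _) m).1 hm
    · rw [List.prod_cons, ← hmx, ← hprod, List.length_cons, pow_succ']
      simp only [smul_eq_mul]
      group

theorem halfProds_subset (h : InNormalizedCoset N d P) :
    halfProds P ⊆ d ^ (card P / 2) • (N : Set G) := by
  rintro _ ⟨l, hl, hcard, rfl⟩
  rw [show card P / 2 = l.length by omega]
  exact h.prod_mem fun x hx ↦ mem_of_le hl (mem_coe.2 hx)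

theorem halfProds_eq [Finite G] (h : InNormalizedCoset N d P)
    (hcard : Nat.card N ≤ (halfProds P).ncard) : halfProds P = d ^ (card P / 2) • (N : Set G) :=
  Set.eq_of_subset_of_ncard_le h.halfProds_subset (by rwa [ncard_smul_coe])

theorem ncard_le_card [Finite G] (h : InNormalizedCoset N d P) (hX : X ⊆ halfProds P) :
    X.ncard ≤ Nat.card N := by
  rw [← ncard_smul_coe (d ^ (card P / 2)) N]
  exact Set.ncard_le_ncard (hX.trans h.halfProds_subset)

theorem stabilizer_le (h : InNormalizedCoset N d P) (hX : X ⊆ halfProds P)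
    (hne : X.Nonempty) : MulAction.stabilizer G X ≤ N :=
  stabilizer_le_of_subset_smul (pow_mem h.mem_normalizer _) hne (hX.trans h.halfProds_subset)

theorem ncard_add_card_stabilizer_le (h : InNormalizedCoset N d P) (hX : X ⊆ halfProds P)
    (hne : X.Nonempty) (hlt : X.ncard < Nat.card N) :
    X.ncard + Nat.card (MulAction.stabilizer G X) ≤ Nat.card N :=
  add_le_of_dvd_of_lt (card_stabilizer_dvd_ncard X)
    (Subgroup.card_dvd_of_le (h.stabilizer_le hX hne)) hlt

end InNormalizedCoset

theorem inNormalizedCoset_stabilizer (ha : a • X = X <• a) (hR : ∀ w ∈ R, w • X = a • X) :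
    InNormalizedCoset (MulAction.stabilizer G X) a R :=
  ⟨mem_normalizer_stabilizer ha, fun w hw ↦ mem_smul_iff_smul_eq.2 (hR w hw)⟩

/-- The half-length products of some subsequence of `R`, with at most `2 |K| - 2` terms, number
at least `|K|`; when `R` lies in a coset normalizing `K` they then fill a coset of `K`. -/
def CoversCoset (K : Subgroup G) (R : Multiset G) : Prop :=
  ∃ P ≤ R, card P + 2 ≤ 2 * Nat.card K ∧ Nat.card K ≤ (halfProds P).ncard

theorem coversCoset_of_card_eq_one [Finite G] {K : Subgroup G} (hK : Nat.card K = 1)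
    (R : Multiset G) : CoversCoset K R := by
  refine ⟨0, zero_le R, by rw [hK, card_zero], ?_⟩
  rw [hK, Nat.one_le_iff_ne_zero]
  exact Set.ncard_ne_zero_of_mem one_mem_halfProds_zero

variable [DecidableEq G]

/-- At least `2 |N| + C` terms of `R` lie in a single coset normalizing `N`, with no term taking up
all but fewer than `|N|` of them. -/
def Concentrates (N : Subgroup G) (C : ℕ) (R : Multiset G) : Prop :=
  ∃ d, ∃ R' ≤ R, InNormalizedCoset N d R' ∧ IsSpread R' (Nat.card N) ∧
    2 * Nat.card N + C ≤ card R'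

theorem Concentrates.mono (h : Concentrates N C R') (hR : R' ≤ R) : Concentrates N C R := by
  obtain ⟨d, T, hT, h⟩ := h
  exact ⟨d, T, hT.trans hR, h⟩

theorem Concentrates.one_lt_card [Finite G] (h : Concentrates N C R) : 1 < Nat.card N := by
  obtain ⟨d, R', -, hcoset, hspread, -⟩ := h
  obtain ⟨a, ha, had⟩ := hspread.exists_mem_ne Nat.card_pos d
  obtain ⟨g, hg, rfl⟩ := hcoset.mem_smul a ha
  rw [Subgroup.one_lt_card_iff_ne_bot]
  rintro rfl
  exact had (by simp [Subgroup.mem_bot.1 hg])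

theorem exists_lt_ncard_pairTranslates_or_concentrates [Finite G]
    (h : InNormalizedCoset N d P) (hX : X ⊆ halfProds P) (hne : X.Nonempty)
    (hcard : Nat.card N = X.ncard + s) (hs : 0 < s) (hR : 2 * s + C ≤ card R)
    (hspread : IsSpread R s) :
    (∃ a w T, R = a ::ₘ w ::ₘ T ∧ (∀ x ≠ a, 2 * R.count x ≤ card R) ∧
      X.ncard < (pairTranslates X a w).ncard) ∨ ∃ N' < N, Concentrates N' C R := by
  -- Always spending a most frequent term keeps the remaining terms spread.
  obtain ⟨a, ha, hmode⟩ := exists_mem_forall_two_mul_count_le_card (R := R)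
    (card_pos.1 (by omega))
  obtain ⟨T, rfl⟩ := exists_cons_of_mem ha
  by_cases! hgrow : ∃ w ∈ T, X.ncard < (pairTranslates X a w).ncard
  · obtain ⟨w, hw, hlt⟩ := hgrow
    obtain ⟨T, rfl⟩ := exists_cons_of_mem hw
    exact Or.inl ⟨a, w, T, rfl, hmode, hlt⟩
  right
  obtain ⟨w, hw, hwa⟩ := hspread.exists_mem_ne hs a
  obtain ⟨ha_comm, -⟩ :=
    eq_of_ncard_pairTranslates_le (hgrow w ((mem_cons.1 hw).resolve_left hwa))
  have hstab : ∀ w ∈ a ::ₘ T, w • X = a • X := forall_mem_cons.2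
    ⟨rfl, fun w hw ↦ (eq_of_ncard_pairTranslates_le (hgrow w hw)).2⟩
  have hpos := (Set.ncard_pos).2 hne
  have hle := h.ncard_add_card_stabilizer_le hX hne (by omega)
  refine ⟨MulAction.stabilizer G X, (h.stabilizer_le hX hne).lt_of_ne ?_, a, a ::ₘ T, le_rfl,
    inNormalizedCoset_stabilizer ha_comm hstab, hspread.mono (by omega), by omega⟩
  intro heq
  rw [heq] at hle
  omega

theorem exists_card_le_ncard_halfProds_or_concentrates [Finite G]
    (h : InNormalizedCoset N d (P + R)) (hX : X ⊆ halfProds P) (hne : X.Nonempty)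
    (hcard : Nat.card N = X.ncard + s) (hC : 0 < C) (hR : 2 * s + C ≤ card R)
    (hspread : IsSpread R s) :
    (∃ Q ≤ R, card Q ≤ 2 * s ∧ Nat.card N ≤ (halfProds (P + Q)).ncard) ∨
      ∃ N' < N, Concentrates N' C R := by
  induction s using Nat.strong_induction_on generalizing P R X with | _ s ih
  rcases s.eq_zero_or_pos with rfl | hs
  · exact Or.inl ⟨0, zero_le R, Nat.zero_le _, by
      rw [hcard, add_zero, add_zero]
      exact Set.ncard_le_ncard hX⟩
  rcases exists_lt_ncard_pairTranslates_or_concentrates (h.mono (Multiset.le_add_right P R))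
    hX hne hcard hs hR hspread with ⟨a, w, T, rfl, hmode, hlt⟩ | hconc
  swap
  · exact Or.inr hconc
  have hPQ (Q : Multiset G) : P + a ::ₘ w ::ₘ Q = a ::ₘ w ::ₘ P + Q := by
    simp only [add_cons, cons_add]
  rw [hPQ] at h
  have hY := pairTranslates_subset_halfProds hX a w
  have hle := (h.mono (Multiset.le_add_right _ T)).ncard_le_card hY
  rw [card_cons, card_cons] at hR
  obtain ⟨s, rfl⟩ := Nat.exists_eq_succ_of_ne_zero hs.ne'
  rcases ih (Nat.card N - (pairTranslates X a w).ncard) (by omega) h hY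
    (Set.nonempty_of_ncard_ne_zero (by omega)) (by omega) (by omega)
    ((hspread.of_cons_cons (by omega) hmode).mono (by omega)) with
    ⟨Q, hQ, hQcard, hQN⟩ | ⟨N', hN', hconc⟩
  · refine Or.inl ⟨a ::ₘ w ::ₘ Q, cons_le_cons a (cons_le_cons w hQ), ?_, ?_⟩
    · rw [card_cons, card_cons]
      omega
    · rwa [hPQ]
  · exact Or.inr ⟨N', hN', hconc.mono ((le_cons_self T w).trans (le_cons_self _ a))⟩

theorem InNormalizedCoset.coversCoset_or_concentrates [Finite G]
    (h : InNormalizedCoset N d R) (hC : 0 < C)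
    (hR : 2 * Nat.card N + C ≤ card R + 2) (hspread : IsSpread R (Nat.card N - 1)) :
    CoversCoset N R ∨ ∃ N' < N, Concentrates N' C R := by
  have hpos : 0 < Nat.card N := Nat.card_pos
  rcases exists_card_le_ncard_halfProds_or_concentrates (P := 0) (X := {1}) (C := C)
    (by rwa [zero_add]) (Set.singleton_subset_iff.2 one_mem_halfProds_zero)
    (Set.singleton_nonempty 1) (by rw [Set.ncard_singleton]; omega) hC (by omega) hspread with
    ⟨Q, hQ, hQcard, hQN⟩ | hconc
  · exact Or.inl ⟨Q, hQ, by omega, by rwa [zero_add] at hQN⟩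
  · exact Or.inr hconc

end HalfProds

section MinimalHeavyCoset

variable {K M : Subgroup G} {P A B R R' : Multiset G} {X : Set G} {b c r t : G} {C j n : ℕ}

/-- `R` consists of `n + |K| - 1` terms of a coset normalizing `K`, and no proper subgroup `N` of
`K` has a coset that holds as many as `n + |N| - 1` of these terms. -/
structure IsMinimalHeavyCoset (n : ℕ) (K : Subgroup G) (c : G) (R : Multiset G) : Prop
    extends InNormalizedCoset K c R where
  card_add_one : card R + 1 = n + Nat.card K
  card_add_two_le : ∀ N < K, ∀ d, ∀ R' ≤ R, InNormalizedCoset N d R' →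
    card R' + 2 ≤ n + Nat.card N

/-- Some subsequence of `R` has at least `m` half-length products, and no fewer of them than it
has terms. -/
def HasManyHalfProds (m : ℕ) (R : Multiset G) : Prop :=
  ∃ P ≤ R, card P ≤ (halfProds P).ncard ∧ m ≤ (halfProds P).ncard

theorem HasManyHalfProds.mono {k m : ℕ} (h : HasManyHalfProds m R) (hk : k ≤ m) :
    HasManyHalfProds k R := by
  obtain ⟨P, hP, hPcard, hm⟩ := h
  exact ⟨P, hP, hPcard, hk.trans hm⟩

theorem InNormalizedCoset.lt_ncard_pairTranslates [Finite G] (h : InNormalizedCoset M b (r ::ₘ P))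
    (ht : t ∉ b • (M : Set G)) (hX : X ⊆ halfProds P) (hne : X.Nonempty) :
    X.ncard < (pairTranslates X r t).ncard := by
  by_contra! hle
  have hts : t ∈ r • (MulAction.stabilizer G X : Set G) :=
    mem_smul_iff_smul_eq.2 (eq_of_ncard_pairTranslates_le hle).2
  have hrt := (h.mono (le_cons_self P r)).stabilizer_le hX hne (mem_leftCoset_iff _ |>.1 hts)
  refine ht ((mem_leftCoset_iff b).2 ?_)
  have := M.mul_mem ((mem_leftCoset_iff b).1 (h.mem_smul r (mem_cons_self r P))) hrt
  rwa [mul_assoc, mul_inv_cancel_left] at this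

theorem ncard_add_card_le_ncard_pairTranslates (hr : r ∈ Subgroup.normalizer (M : Set G))
    (hX : X * (M : Set G) = X) (hlt : X.ncard < (pairTranslates X r t).ncard) :
    X.ncard + Nat.card M ≤ (pairTranslates X r t).ncard :=
  add_le_of_dvd_of_lt (card_dvd_ncard_of_mul_eq hX)
    (card_dvd_ncard_of_mul_eq (pairTranslates_mul_eq hr hX t)) hlt

namespace IsMinimalHeavyCoset

theorem count_add_one_le [DecidableEq G] (h : IsMinimalHeavyCoset n K c R)
    (hK : 1 < Nat.card K) (x : G) : R.count x + 1 ≤ n := by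
  have hcoset : InNormalizedCoset ⊥ x (replicate (R.count x) x) := by
    refine ⟨?_, fun y hy ↦ ?_⟩
    · rw [Subgroup.normalizer_eq_top]
      exact Subgroup.mem_top x
    · rw [eq_of_mem_replicate hy]
      exact (mem_leftCoset_iff x).2 (by simp)
  have := h.card_add_two_le ⊥ (bot_lt_iff_ne_bot.2 fun hbot ↦ by simp [hbot] at hK) x _
    (le_count_iff_replicate_le.1 le_rfl) hcoset
  rw [card_replicate, Subgroup.card_bot] at this
  omega

theorem exists_lt_ncard_pairTranslates [Finite G] (h : IsMinimalHeavyCoset n K c (P + (A + B)))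
    (hX : X ⊆ halfProds P) (hne : X.Nonempty) (hPX : card P ≤ X.ncard)
    (hXK : X.ncard < Nat.card K) (hA : A ≠ 0) (hB : B ≠ 0) :
    ∃ r ∈ A, ∃ t ∈ B, X.ncard < (pairTranslates X r t).ncard := by
  by_contra! hstuck
  obtain ⟨r, hr⟩ := exists_mem_of_ne_zero hA
  obtain ⟨t, ht⟩ := exists_mem_of_ne_zero hB
  have hstab : ∀ w ∈ A + B, w • X = r • X := fun w hw ↦ by
    rcases mem_add.1 hw with hw | hw
    · rw [← (eq_of_ncard_pairTranslates_le (hstuck w hw t ht)).2,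
        (eq_of_ncard_pairTranslates_le (hstuck r hr t ht)).2]
    · exact (eq_of_ncard_pairTranslates_le (hstuck r hr w hw)).2
  have hP := h.mono (Multiset.le_add_right P (A + B))
  have hle := hP.ncard_add_card_stabilizer_le hX hne hXK
  have hpos := (Set.ncard_pos).2 hne
  have hlt : MulAction.stabilizer G X < K := (hP.stabilizer_le hX hne).lt_of_ne fun heq ↦ by
    rw [heq] at hle
    omega
  have := h.card_add_two_le _ hlt r _ (Multiset.le_add_left (A + B) P)
    (inNormalizedCoset_stabilizer (eq_of_ncard_pairTranslates_le (hstuck r hr t ht)).1 hstab)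
  have := h.card_add_one
  rw [card_add] at this
  omega

theorem coversCoset_or_hasManyHalfProds [Finite G]
    (h : IsMinimalHeavyCoset n K c (P + (A + B)))
    (hA : ∀ r ∈ A, r ∈ Subgroup.normalizer (M : Set G)) (hX : X ⊆ halfProds P)
    (hXM : X * (M : Set G) = X) (hM : 1 < Nat.card M) (hX2 : 1 < X.ncard)
    (hPX : card P ≤ X.ncard) (hB : Nat.card K ≤ card B + X.ncard) (hj : j ≤ card A) :
    CoversCoset K (P + (A + B)) ∨ HasManyHalfProds (X.ncard + Nat.card M * j) (P + (A + B)) := by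
  induction j generalizing P A B X with
  | zero =>
    have := Set.ncard_le_ncard hX
    exact Or.inr ⟨P, Multiset.le_add_right _ _, hPX.trans this, this⟩
  | succ j ih =>
    have hPK := (h.mono (Multiset.le_add_right P (A + B))).ncard_le_card hX
    rcases hPK.eq_or_lt with heq | hlt
    · exact Or.inl ⟨P, Multiset.le_add_right _ _, by omega, heq ▸ Set.ncard_le_ncard hX⟩
    obtain ⟨r, hr, t, ht, hgrow⟩ := h.exists_lt_ncard_pairTranslates hX
      (Set.nonempty_of_ncard_ne_zero (by omega)) hPX hlt (card_pos.1 (by omega))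
      (card_pos.1 (by omega))
    have hle := ncard_add_card_le_ncard_pairTranslates (hA r hr) hXM hgrow
    obtain ⟨A, rfl⟩ := exists_cons_of_mem hr
    obtain ⟨B, rfl⟩ := exists_cons_of_mem ht
    rw [add_cons_add_cons] at h ⊢
    rw [card_cons] at hB hj
    rcases ih h (fun x hx ↦ hA x (mem_cons_of_mem hx)) (pairTranslates_subset_halfProds hX r t)
      (pairTranslates_mul_eq (hA r hr) hXM t) (by omega) (by rw [card_cons, card_cons]; omega)
      (by omega) (by omega) with hcov | ⟨Q, hQ, hQcard, hQm⟩
    · exact Or.inl hcov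
    · exact Or.inr ⟨Q, hQ, hQcard, by rw [Nat.mul_succ]; omega⟩

theorem coversCoset_or_hasManyHalfProds_of_notMem [Finite G]
    (h : IsMinimalHeavyCoset n K c (P + (A + B))) (hM : 1 < Nat.card M) (hMK : M < K)
    (hPA : InNormalizedCoset M b (P + A)) (hB : ∀ x ∈ B, x ∉ b • (M : Set G))
    (hP : card P + 2 ≤ 2 * Nat.card M) (hPM : Nat.card M ≤ (halfProds P).ncard)
    (hA : C + 2 ≤ card A) :
    CoversCoset K (P + (A + B)) ∨ HasManyHalfProds (C + 3) (P + (A + B)) := by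
  have hprods := (hPA.mono (Multiset.le_add_right P A)).halfProds_eq hPM
  have hXM : halfProds P * (M : Set G) = halfProds P := by rw [hprods, smul_mul_assoc, coe_mul_coe]
  have hBcard := h.card_add_two_le M hMK b (P + A)
    (by rw [← add_assoc]; exact Multiset.le_add_right _ _) hPA
  have hRcard := h.card_add_one
  rw [card_add] at hBcard
  rw [card_add, card_add] at hRcard
  have hMltK : Nat.card M < Nat.card K := Set.ncard_lt_ncard hMK
  obtain ⟨r, hr⟩ := card_pos_iff_exists_mem.1 (show 0 < card A by omega)
  obtain ⟨t, ht⟩ := card_pos_iff_exists_mem.1 (show 0 < card B by omega)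
  obtain ⟨A, rfl⟩ := exists_cons_of_mem hr
  obtain ⟨B, rfl⟩ := exists_cons_of_mem ht
  have hrP : InNormalizedCoset M b (r ::ₘ P) := hPA.mono (by
    rw [add_cons]
    exact cons_le_cons r (Multiset.le_add_right P A))
  have hgrow := ncard_add_card_le_ncard_pairTranslates
    (hrP.mem_normalizer_of_mem (mem_cons_self r P)) hXM (hrP.lt_ncard_pairTranslates
      (hB t (mem_cons_self t B)) subset_rfl (Set.nonempty_of_ncard_ne_zero (by omega)))
  rw [add_cons_add_cons] at h ⊢
  rw [card_cons] at hA hBcard hRcard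
  rw [card_cons] at hRcard
  refine (h.coversCoset_or_hasManyHalfProds (j := C + 1) ?_
    (pairTranslates_subset_halfProds subset_rfl r t)
    (pairTranslates_mul_eq (hrP.mem_normalizer_of_mem (mem_cons_self r P)) hXM t) hM
    (by omega) (by rw [card_cons, card_cons]; omega) (by omega) (by omega)).imp_right ?_
  · exact fun x hx ↦ hPA.mem_normalizer_of_mem (mem_add.2 (Or.inr (mem_cons_of_mem hx)))
  · refine fun hmany ↦ hmany.mono ?_
    have := Nat.mul_le_mul_right (C + 1) hM
    omega

theorem coversCoset_or_hasManyHalfProds_of_coversCoset [Finite G]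
    (h : IsMinimalHeavyCoset n K c R)
    (hM : 1 < Nat.card M) (hMK : M < K) (hR' : R' ≤ R) (hb : InNormalizedCoset M b R')
    (hcov : CoversCoset M R') (hC : 2 * Nat.card M + C ≤ card R') :
    CoversCoset K R ∨ HasManyHalfProds (C + 3) R := by
  classical
  obtain ⟨P, hP, hPcard, hPM⟩ := hcov
  obtain ⟨V, rfl⟩ := Multiset.le_iff_exists_add.1 hP
  obtain ⟨U, rfl⟩ := Multiset.le_iff_exists_add.1 (hP.trans hR')
  have hVA : V ≤ U.filter (· ∈ b • (M : Set G)) := Multiset.le_filter.2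
    ⟨Multiset.add_le_add_iff_left.1 hR', fun x hx ↦ hb.mem_smul x (mem_add.2 (Or.inr hx))⟩
  have hVcard := card_le_card hVA
  rw [card_add] at hC
  rw [← filter_add_not (· ∈ b • (M : Set G)) U] at h ⊢
  refine h.coversCoset_or_hasManyHalfProds_of_notMem hM hMK ⟨hb.mem_normalizer, fun x hx ↦ ?_⟩
    (fun x hx ↦ (mem_filter.1 hx).2) hPcard hPM (by omega)
  rcases mem_add.1 hx with hx | hx
  · exact hb.mem_smul x (mem_add.2 (Or.inl hx))
  · exact (mem_filter.1 hx).2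

theorem coversCoset_or_concentrates_of_hasManyHalfProds [Finite G] [DecidableEq G]
    (h : IsMinimalHeavyCoset n K c R) (hK : 1 < Nat.card K) (hn : Nat.card K ≤ n)
    (hprods : HasManyHalfProds (C + 2) R) (hC : 0 < C) :
    CoversCoset K R ∨ ∃ N < K, Concentrates N C R := by
  obtain ⟨P, hP, hPcard, hCP⟩ := hprods
  obtain ⟨Q, rfl⟩ := Multiset.le_iff_exists_add.1 hP
  have hPK := (h.mono hP).ncard_le_card subset_rfl
  have hRcard := h.card_add_one
  rw [card_add] at hRcard
  have hspread : IsSpread Q (Nat.card K - (halfProds P).ncard) := fun x ↦ by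
    have := h.count_add_one_le hK x
    rw [count_add] at this
    omega
  rcases exists_card_le_ncard_halfProds_or_concentrates h.toInNormalizedCoset subset_rfl
    (Set.nonempty_of_ncard_ne_zero (by omega)) (Nat.add_sub_of_le hPK).symm hC (by omega)
    hspread with ⟨T, hT, hTcard, hTK⟩ | ⟨N, hN, hconc⟩
  · exact Or.inl ⟨P + T, add_le_add_right hT P, by rw [card_add]; omega, hTK⟩
  · exact Or.inr ⟨N, hN, hconc.mono (Multiset.le_add_left Q P)⟩

theorem coversCoset [Finite G] (h : IsMinimalHeavyCoset n K c R) (hn : Nat.card K ≤ n) :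
    CoversCoset K R := by
  classical
  rcases (Nat.one_le_iff_ne_zero.2 Nat.card_pos.ne' : 1 ≤ Nat.card K).eq_or_lt with hK | hK
  · exact coversCoset_of_card_eq_one hK.symm R
  by_contra hcov
  have hRcard := h.card_add_one
  have hspread : IsSpread R (Nat.card K - 1) := fun x ↦ by
    have := h.count_add_one_le hK x
    omega
  have hconc := (h.toInNormalizedCoset.coversCoset_or_concentrates one_pos (by omega)
    hspread).resolve_left hcov
  -- At the largest `C`, the coset of `M` must be covered, and any further failure of growth would
  -- produce a concentration larger than `C`.
  have hbdd : BddAbove {C | ∃ M < K, Concentrates M C R} := ⟨card R, by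
    rintro C ⟨M, -, d, R', hR', -, -, hC⟩
    have := card_le_card hR'
    omega⟩
  obtain ⟨C, ⟨M, hMK, hM⟩, hmax⟩ := hbdd.exists_isGreatest_of_nonempty ⟨1, hconc⟩
  have hM1 := hM.one_lt_card
  obtain ⟨b, R', hR', hb, hspread', hC⟩ := hM
  have hcovM : CoversCoset M R' := by
    refine (hb.coversCoset_or_concentrates (C := C + 2) (by omega) (by omega)
      (hspread'.mono (by omega))).resolve_right ?_
    rintro ⟨N, hNM, hN⟩
    have := hmax ⟨N, hNM.trans hMK, hN.mono hR'⟩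
    omega
  have hprods := (h.coversCoset_or_hasManyHalfProds_of_coversCoset hM1 hMK hR' hb hcovM
    hC).resolve_left hcov
  have := hmax ((h.coversCoset_or_concentrates_of_hasManyHalfProds (C := C + 1) hK hn hprods
    C.succ_pos).resolve_left hcov)
  omega

end IsMinimalHeavyCoset

end MinimalHeavyCoset

section Olson

variable [Finite G] {K : Subgroup G} {R S : Multiset G} {c : G} {n : ℕ}

theorem CoversCoset.hasProdOneSubseqOfLen (hcov : CoversCoset K R) (h : InNormalizedCoset K c R)
    (hR : Nat.card G + Nat.card K ≤ card R + 1) : HasProdOneSubseqOfLen R (Nat.card G) := by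
  obtain ⟨P, hP, hPcard, hPK⟩ := hcov
  obtain ⟨U, rfl⟩ := Multiset.le_iff_exists_add.1 hP
  have hKG := Subgroup.card_le_card_group K
  rw [card_add] at hR
  obtain ⟨T, hTU, hT⟩ := exists_multiset_le_card_eq
    (show Nat.card G - card P / 2 ≤ card U by omega)
  obtain ⟨l, rfl⟩ := Quot.exists_rep T
  have hl := h.prod_mem fun x (hx : x ∈ l) ↦
    mem_add.2 (Or.inr (mem_of_le hTU (mem_coe.2 hx)))
  have hc : c ^ l.length = (c ^ (card P / 2))⁻¹ := by
    rw [eq_inv_iff_mul_eq_one, ← pow_add, show l.length = Nat.card G - card P / 2 from hT,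
      Nat.sub_add_cancel (by omega), pow_card_eq_one']
  obtain ⟨l', hl', hl'card, hl'prod⟩ : l.prod⁻¹ ∈ halfProds P := by
    rw [(h.mono hP).halfProds_eq hPK, mem_leftCoset_iff, ← mul_inv_rev, SetLike.mem_coe,
      inv_mem_iff]
    rwa [smul_coe_eq_of_mem_normalizer (pow_mem h.mem_normalizer _), mem_rightCoset_iff, hc,
      inv_inv] at hl
  refine ⟨(l' ++ l : List G), ?_, ?_, l' ++ l, rfl, ?_⟩
  · rw [← coe_add]
    exact add_le_add hl' hTU
  · have : l.length = Nat.card G - card P / 2 := hT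
    rw [coe_card, List.length_append]
    omega
  · rw [List.prod_append, hl'prod, inv_mul_cancel]

theorem exists_isMinimalHeavyCoset (hn : 0 < n) (hS : n + Nat.card G ≤ card S + 1) :
    ∃ K c, ∃ R ≤ S, IsMinimalHeavyCoset n K c R := by
  let IsHeavy (K : Subgroup G) : Prop :=
    ∃ c, ∃ R ≤ S, InNormalizedCoset K c R ∧ n + Nat.card K ≤ card R + 1
  have htop : IsHeavy ⊤ := ⟨1, S, le_rfl, ⟨one_mem _, by simp⟩, by rwa [Subgroup.card_top]⟩
  obtain ⟨K, ⟨c, T, hT, hc, hK⟩, hmin⟩ := wellFounded_lt.has_min {K | IsHeavy K} ⟨⊤, htop⟩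
  obtain ⟨R, hR, hRcard⟩ := exists_multiset_le_card_eq
    (show n + Nat.card K - 1 ≤ card T by omega)
  refine ⟨K, c, R, hR.trans hT, hc.mono hR, by omega, fun N hN d R' hR' hd ↦ ?_⟩
  by_contra! hlt
  exact hmin N ⟨d, R', hR'.trans (hR.trans hT), hd, by omega⟩ hN

theorem hasProdOneSubseqOfLen_of_two_mul_card_le (hS : 2 * Nat.card G ≤ card S + 1) :
    HasProdOneSubseqOfLen S (Nat.card G) := by
  obtain ⟨K, c, R, hR, h⟩ := exists_isMinimalHeavyCoset (n := Nat.card G) Nat.card_pos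
    (by omega : Nat.card G + Nat.card G ≤ card S + 1)
  have hcov := h.coversCoset (Subgroup.card_le_card_group K)
  obtain ⟨T, hT, hTprod⟩ := hcov.hasProdOneSubseqOfLen h.toInNormalizedCoset h.card_add_one.ge
  exact ⟨T, hT.trans hR, hTprod⟩

theorem hasProdOneSubseqOfLen_of_EGZconst_le (hS : EGZconst G ≤ card S) :
    HasProdOneSubseqOfLen S (Nat.card G) := by
  have hne : {t | ∀ S : Multiset G, card S = t →
      HasProdOneSubseqOfLen S (Nat.card G)}.Nonempty :=
    ⟨2 * Nat.card G, fun S hS ↦ hasProdOneSubseqOfLen_of_two_mul_card_le (by omega)⟩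
  obtain ⟨S', hS', hcard⟩ := exists_multiset_le_card_eq hS
  obtain ⟨T, hT, hTprod⟩ := Nat.sInf_mem hne S' hcard
  exact ⟨T, hT.trans hS', hTprod⟩

end Olson

section Blocks

/-- A sequence of `[G : H]` terms of `G` with product in `H`. -/
structure Block (H : Subgroup G) where
  toList : List G
  length_eq : toList.length = H.index
  prod_mem : toList.prod ∈ H

/-- The terms of a block, as a multiset. -/
def Block.terms {H : Subgroup G} (β : Block H) : Multiset G :=
  β.toList

/-- The product of a block, as an element of `H`. -/
def Block.prod {H : Subgroup G} (β : Block H) : H :=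
  ⟨β.toList.prod, β.prod_mem⟩

variable {H : Subgroup G}

theorem hasProdOneSubseqOfLen_of_EGZconst_le_card_blocks [Finite H] {B : Multiset (Block H)}
    (hB : EGZconst H ≤ card B) :
    HasProdOneSubseqOfLen (B.map Block.terms).join (Nat.card G) := by
  obtain ⟨T, hT, hcard, l, rfl, hl⟩ := hasProdOneSubseqOfLen_of_EGZconst_le
    (S := B.map Block.prod) (by rwa [card_map])
  obtain ⟨L, hL, rfl⟩ := exists_map_eq_of_coe_le_map hT
  rw [coe_card, List.length_map] at hcard
  let flat : List G := (L.map Block.toList).flatten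
  refine ⟨flat, ?_, ?_, flat, rfl, ?_⟩
  · obtain ⟨B', rfl⟩ := Multiset.le_iff_exists_add.1 hL
    rw [← coe_join, List.map_map, Multiset.map_add, join_add]
    exact Multiset.le_add_right _ _
  · have hlen : ∀ β ∈ L, (List.length ∘ Block.toList) β = H.index := fun β _ ↦ β.length_eq
    rw [coe_card, List.length_flatten, List.map_map, List.map_congr_left hlen, List.map_const',
      List.sum_replicate, hcard, smul_eq_mul, H.card_mul_index]
  · rw [List.prod_flatten, List.map_map, ← H.coe_one, ← hl, ← H.coe_subtype, map_list_prod,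
      List.map_map]
    rfl

variable [H.Normal] [H.FiniteIndex]

theorem exists_block {S : Multiset G} (hS : 2 * H.index ≤ card S + 1) :
    ∃ β : Block H, β.terms ≤ S := by
  obtain ⟨T, hT, hcard, l, rfl, hl⟩ := hasProdOneSubseqOfLen_of_two_mul_card_le
    (S := S.map (QuotientGroup.mk' H)) (by rwa [card_map])
  obtain ⟨l, hlS, rfl⟩ := exists_map_eq_of_coe_le_map hT
  refine ⟨⟨l, ?_, ?_⟩, hlS⟩
  · rwa [coe_card, List.length_map] at hcard
  · rwa [← map_list_prod, QuotientGroup.mk'_apply, QuotientGroup.eq_one_iff] at hl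

theorem exists_blocks {k : ℕ} {S : Multiset G} (hS : (k + 1) * H.index ≤ card S + 1) :
    ∃ B : Multiset (Block H), card B = k ∧ (B.map Block.terms).join ≤ S := by
  induction k generalizing S with
  | zero => exact ⟨0, rfl, zero_le S⟩
  | succ k ih =>
    obtain ⟨β, hβ⟩ := exists_block (H := H) (S := S)
      ((Nat.mul_le_mul_right _ (by omega)).trans hS)
    obtain ⟨U, rfl⟩ := Multiset.le_iff_exists_add.1 hβ
    have hβcard : card β.terms = H.index := β.length_eq
    rw [card_add, hβcard, Nat.succ_mul] at hS
    obtain ⟨B, hB, hBU⟩ := ih (S := U) (by omega)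
    refine ⟨β ::ₘ B, by rw [card_cons, hB], ?_⟩
    rw [map_cons, join_cons]
    exact add_le_add_right hBU _

end Blocks

theorem EGZconst_le_of_normal_general [Finite G] (H : Subgroup G) [H.Normal] :
    EGZconst G + 1 ≤ (EGZconst H + 1) * H.index := by
  have hpos : 0 < (EGZconst H + 1) * H.index :=
    Nat.mul_pos (Nat.succ_pos _) (Nat.pos_of_ne_zero H.index_ne_zero_of_finite)
  suffices EGZconst G ≤ (EGZconst H + 1) * H.index - 1 by omega
  refine Nat.sInf_le fun S hS ↦ ?_
  obtain ⟨B, hB, hBS⟩ := exists_blocks (H := H) (S := S) (k := EGZconst H) (by omega)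
  obtain ⟨T, hT, hTprod⟩ := hasProdOneSubseqOfLen_of_EGZconst_le_card_blocks hB.ge
  exact ⟨T, hT.trans hBS, hTprod⟩

end Group

/-- If `H ⊴ G` and `E(H) ≤ c|H| - 1` for a constant `1 < c ≤ 2`, then
`E(G) ≤ c|G| - 1`. -/
theorem EGZconst_le_of_normal (G : Type*) [Group G] [Finite G]
    (H : Subgroup G) (hH : H.Normal) (c : ℝ) (hc1 : 1 < c) (hc2 : c ≤ 2)
    (hEH : (EGZconst H : ℝ) ≤ c * (Nat.card H : ℝ) - 1) :
    (EGZconst G : ℝ) ≤ c * (Nat.card G : ℝ) - 1 := by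
  have hle : (EGZconst G + 1 : ℝ) ≤ (EGZconst H + 1) * H.index := mod_cast
    EGZconst_le_of_normal_general H
  have hmul := mul_le_mul_of_nonneg_right (le_sub_iff_add_le.1 hEH) (Nat.cast_nonneg H.index)
  rw [mul_assoc, ← Nat.cast_mul, H.card_mul_index] at hmul
  exact le_sub_iff_add_le.2 (hle.trans hmul)
end

section
/- Let G be cyclic of order n ≥ 4 and S a sequence over G of length 2n−3 that has no product-one subsequence of length n. Then S = a^{[n-1]} · b^{[n-2]} or S = a^{[n-1]} · b^{[n-3]} · (b^2 a^{-1}) for some a, b ∈ G with ord(a b^{-1}) = n. -/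
/-!
In a product-one-free sequence the sets of products of few terms are large: by the
Kemperman–Scherk inequality `#A + #B ≤ #(A * B) + 1`, splitting the sequence into blocks makes the
gains of the blocks add up, and any gain beyond one element per term is soon incompatible with the
order of `G`.

Translate `S` so that its most frequent term becomes `1`, with multiplicity `h`, and let `N` consist
of the other terms. Removing from `N` a longest product-one subsequence of length at most `n` leaves
at least `n - 2` terms, with no short product-one subsequence; keep `n - 2` of them. Three distinct
non-involutions among them would gain too much, so there are at most two, each with multiplicity at
most `h`. Hence `h` is at least about `n / 2`, and the `n - 2` terms are product-one free.
Two disjoint pairs of distinct terms also gain too much, so these terms are `n - 3` copies of a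
generator `g` and one copy of `g` or `g ^ 2`. Any further terms of `N` would complete a forbidden
product-one subsequence, so `h = n - 1`.
-/

open Finset
open scoped Pointwise

section KempermanScherk

variable {G : Type*} [CommGroup G] {A B D : Finset G}

theorem card_add_card_le_card_mul_add_one [DecidableEq G] (hA : 1 ∈ A) (hB : 1 ∈ B)
    (hAB : ∀ a ∈ A, ∀ b ∈ B, a * b = 1 → b = 1) : #A + #B ≤ #(A * B) + 1 := by
  induction B using Finset.strongInduction generalizing A with
  | H B ih =>
    by_cases hstable : ∀ e ∈ A, ∀ b ∈ B, e * b ∈ A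
    · have hB1 : ∀ b ∈ B, b = 1 := fun b hb ↦ by
        obtain ⟨a, ha, hab⟩ := surjOn_of_injOn_of_card_le (· * b)
          (fun a ha ↦ hstable a ha b hb) (mul_left_injective b).injOn le_rfl hA
        exact hAB a ha b hb hab
      rw [eq_singleton_iff_unique_mem.2 ⟨hB, hB1⟩, card_singleton, singleton_one, mul_one]
    · push Not at hstable
      obtain ⟨e, he, b, hb, heb⟩ := hstable
      have hmem {z : G} : z ∈ e⁻¹ • A ↔ e * z ∈ A := by rw [mem_inv_smul_finset_iff, smul_eq_mul]
      have hlt : B ∩ e⁻¹ • A ⊂ B :=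
        Finset.ssubset_iff_subset_ne.2
          ⟨inter_subset_left, fun h ↦ heb (hmem.1 (inter_eq_left.1 h hb))⟩
      have hle := ih _ hlt (A := A ∪ e • B) (mem_union_left _ hA)
        (mem_inter.2 ⟨hB, hmem.2 (by rwa [mul_one])⟩) <| by
          intro a ha z hz haz
          obtain ⟨hzB, hzA⟩ := mem_inter.1 hz
          rcases mem_union.1 ha with ha | ha
          · exact hAB a ha z hzB haz
          · obtain ⟨c, hc, rfl⟩ := mem_smul_finset.1 ha
            rw [smul_eq_mul] at haz
            obtain rfl : c = 1 := hAB _ (hmem.1 hzA) c hc (by rw [← haz, mul_right_comm])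
            exact hAB e he z hzB (by rwa [mul_one] at haz)
      calc #A + #B = #(A ∪ e • B) + #(B ∩ e⁻¹ • A) := (mulDysonETransform.card e (A, B)).symm
        _ ≤ #((A ∪ e • B) * (B ∩ e⁻¹ • A)) + 1 := hle
        _ ≤ #(A * B) + 1 :=
          Nat.add_le_add_right (card_le_card (mulDysonETransform.subset e (A, B))) 1

theorem card_add_card_filter_sq_mem_lt [DecidableEq G] (hone : 1 ∈ D) (hAD : A ⊆ D)
    (hmul : ∀ a ∈ A, ∀ b ∈ A, a ≠ b → a * b ∈ D) (hne : ∀ a ∈ A, ∀ b ∈ A, a * b ≠ 1) :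
    #A + #{a ∈ A | a ^ 2 ∈ D} < #D := by
  have h1A : 1 ∉ A := fun h ↦ hne 1 h 1 h (mul_one 1)
  have hlower : #(insert 1 A) + #(insert 1 A) ≤ #(insert 1 A * insert 1 A) + 1 := by
    refine card_add_card_le_card_mul_add_one (mem_insert_self _ _) (mem_insert_self _ _) ?_
    simp only [forall_mem_insert, one_mul, mul_one, imp_self, true_and]
    exact ⟨fun _ _ ↦ trivial, fun a ha ↦ ⟨fun _ ↦ trivial, fun b hb h ↦ (hne a ha b hb h).elim⟩⟩
  have hupper : insert 1 A * insert 1 A ⊆ D ∪ {a ∈ A | a ^ 2 ∉ D}.image (· ^ 2) := by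
    simp only [mul_subset_iff, forall_mem_insert, one_mul, mul_one]
    refine ⟨⟨mem_union_left _ hone, fun b hb ↦ mem_union_left _ (hAD hb)⟩,
      fun a ha ↦ ⟨mem_union_left _ (hAD ha), fun b hb ↦ ?_⟩⟩
    by_cases hD : a * b ∈ D
    · exact mem_union_left _ hD
    · obtain rfl : a = b := by_contra fun hab ↦ hD (hmul a ha b hb hab)
      rw [← sq] at hD ⊢
      exact mem_union_right _ (mem_image_of_mem _ (mem_filter.2 ⟨ha, hD⟩))
  have hcard := ((card_le_card hupper).trans (card_union_le _ _)).trans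
    (Nat.add_le_add_left card_image_le _)
  have hsplit : #{a ∈ A | a ^ 2 ∈ D} + #{a ∈ A | a ^ 2 ∉ D} = #A :=
    card_filter_add_card_filter_not _
  rw [card_insert_of_notMem h1A] at hlower
  omega

theorem eq_of_notMem_of_card_le_add_two (hone : 1 ∈ D) (hAD : A ⊆ D) (h1A : 1 ∉ A)
    (hD : #D ≤ #A + 2) {x y : G} (hx : x ∈ D) (hy : y ∈ D) (hx1 : x ≠ 1) (hy1 : y ≠ 1)
    (hxA : x ∉ A) (hyA : y ∉ A) : x = y := by
  classical
  have hcard : #(D \ insert 1 A) ≤ 1 := by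
    rw [card_sdiff_of_subset (insert_subset hone hAD), card_insert_of_notMem h1A]
    omega
  exact card_le_one.1 hcard x (by simp [hx, hx1, hxA]) y (by simp [hy, hy1, hyA])

-- One of `x * (x * y)` and `y * (x * y)` lies in `A`; multiplying it by the missing factor
-- gives `(x * y) ^ 2`.
theorem mul_sq_mem_of_card_le_add_two (hone : 1 ∈ D) (hAD : A ⊆ D)
    (hmul : ∀ a ∈ A, ∀ b ∈ A, a ≠ b → a * b ∈ D) (hne : ∀ a ∈ A, ∀ b ∈ A, a * b ≠ 1)
    (hD : #D ≤ #A + 2) {x y : G} (hx : x ∈ A) (hy : y ∈ A) (hxy : x ≠ y) (hxyA : x * y ∈ A) :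
    (x * y) ^ 2 ∈ D := by
  have h1A : 1 ∉ A := fun h ↦ hne 1 h 1 h (mul_one 1)
  by_cases hxA : x * (x * y) ∈ A
  · have hne' : x * (x * y) ≠ y := by
      rw [← mul_assoc, Ne, mul_eq_right]
      exact hne x hx x hx
    convert hmul _ hxA y hy hne' using 1
    rw [sq, mul_right_comm, mul_comm]
  by_cases hyA : y * (x * y) ∈ A
  · have hne' : y * (x * y) ≠ x := by
      rw [mul_left_comm, Ne, mul_eq_left]
      exact hne y hy y hy
    convert hmul _ hyA x hx hne' using 1
    rw [sq, mul_assoc x, mul_comm x]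
  have hx_ne : x ≠ x * y := fun h ↦ h1A (mul_eq_left.1 h.symm ▸ hy)
  have hy_ne : y ≠ x * y := fun h ↦ h1A (mul_eq_right.1 h.symm ▸ hx)
  exact absurd (mul_right_cancel (eq_of_notMem_of_card_le_add_two hone hAD h1A hD
    (hmul x hx _ hxyA hx_ne) (hmul y hy _ hxyA hy_ne) (hne x hx _ hxyA) (hne y hy _ hxyA)
    hxA hyA)) hxy

theorem card_add_three_le_card_of_mul_mem (hone : 1 ∈ D) (hAD : A ⊆ D)
    (hmul : ∀ a ∈ A, ∀ b ∈ A, a ≠ b → a * b ∈ D) (hne : ∀ a ∈ A, ∀ b ∈ A, a * b ≠ 1)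
    (hA : 3 ≤ #A) : #A + 3 ≤ #D := by
  classical
  by_contra! hlt
  have hD : #D ≤ #A + 2 := by omega
  have h1A : 1 ∉ A := fun h ↦ hne 1 h 1 h (mul_one 1)
  have hsq_card : #{a ∈ A | a ^ 2 ∈ D} ≤ 1 := by
    have := card_add_card_filter_sq_mem_lt hone hAD hmul hne
    omega
  have mul_mem_iff : ∀ x ∈ A, ∀ y ∈ A, ∀ z ∈ A, x ≠ y → x ≠ z → y ≠ z →
      (x * y ∈ A ↔ x * z ∉ A) := by
    intro x hx y hy z hz hxy hxz hyz
    refine ⟨fun hxyA hxzA ↦ hyz (mul_left_cancel (a := x) ?_),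
      fun hxzA ↦ by_contra fun hxyA ↦ hyz (mul_left_cancel (a := x) ?_)⟩
    · exact card_le_one.1 hsq_card
        _ (mem_filter.2 ⟨hxyA, mul_sq_mem_of_card_le_add_two hone hAD hmul hne hD hx hy hxy hxyA⟩)
        _ (mem_filter.2 ⟨hxzA, mul_sq_mem_of_card_le_add_two hone hAD hmul hne hD hx hz hxz hxzA⟩)
    · exact eq_of_notMem_of_card_le_add_two hone hAD h1A hD (hmul x hx y hy hxy)
        (hmul x hx z hz hxz) (hne x hx y hy) (hne x hx z hz) hxyA hxzA
  -- Among the three pairwise products, any two would have to disagree about lying in `A`.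
  obtain ⟨x, hx, y, hy, z, hz, hxy, hxz, hyz⟩ := two_lt_card.1 hA
  have hx' := mul_mem_iff x hx y hy z hz hxy hxz hyz
  have hy' := mul_mem_iff y hy x hx z hz hxy.symm hyz hxz
  have hz' := mul_mem_iff z hz x hx y hy hxz.symm hyz.symm hxy
  rw [mul_comm y x] at hy'
  rw [mul_comm z x, mul_comm z y] at hz'
  tauto

end KempermanScherk

section Multiset

variable {α : Type*} {T : Multiset α} {r : ℕ} {x y : α}

theorem pair_le_of_ne (hx : x ∈ T) (hy : y ∈ T) (hxy : x ≠ y) : {x, y} ≤ T :=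
  (Multiset.le_iff_subset (by simpa using hxy)).2 (by
    simp only [Multiset.insert_eq_cons, Multiset.cons_subset, Multiset.singleton_subset]
    exact ⟨hx, hy⟩)

theorem card_le_card_toFinset_mul [DecidableEq α] (h : ∀ x, T.count x ≤ r) :
    T.card ≤ #T.toFinset * r := by
  rw [← Multiset.toFinset_sum_count_eq, ← smul_eq_mul]
  exact sum_le_card_nsmul _ _ _ fun x _ ↦ h x

theorem two_le_of_count_le [Fintype α] [DecidableEq α] (hα : 4 ≤ Fintype.card α)
    (hcard : r + T.card + 3 = 2 * Fintype.card α) (hx : x ∉ T) (hcount : ∀ y, T.count y ≤ r) :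
    2 ≤ r := by
  have hsupp : #T.toFinset ≤ Fintype.card α - 1 := by
    rw [← card_univ, ← card_erase_of_mem (mem_univ x)]
    exact card_le_card fun y hy ↦
      mem_erase.2 ⟨fun hyx ↦ hx (hyx ▸ Multiset.mem_toFinset.1 hy), mem_univ y⟩
  have hle := (card_le_card_toFinset_mul hcount).trans (Nat.mul_le_mul_right r hsupp)
  by_contra! hlt
  interval_cases r <;> omega

theorem exists_le_card_eq (h : r ≤ T.card) : ∃ W ≤ T, W.card = r := by
  obtain ⟨l, rfl⟩ := Quot.exists_rep T
  exact ⟨l.take r, (l.take_sublist r).subperm, by simpa using h⟩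

theorem replicate_count_add_filter_ne [DecidableEq α] (T : Multiset α) (x : α) :
    Multiset.replicate (T.count x) x + T.filter (· ≠ x) = T := by
  rw [← Multiset.filter_eq', Multiset.filter_add_not]

end Multiset

section ProdOneFree

variable {M : Type*} [CommMonoid M] {T T₁ : Multiset M} {r s : ℕ} {x y : M}

/-- `T` has no product-one subsequence of length between `1` and `r`; for `r = T.card` this says
that `T` is product-one free. -/
def ProdOneFreeUpTo (r : ℕ) (T : Multiset M) : Prop :=
  ∀ W ≤ T, W ≠ 0 → W.card ≤ r → W.prod ≠ 1

theorem ProdOneFreeUpTo.mono (h : ProdOneFreeUpTo s T) (hrs : r ≤ s) (hT : T₁ ≤ T) :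
    ProdOneFreeUpTo r T₁ :=
  fun W hW hW0 hWr ↦ h W (hW.trans hT) hW0 (hWr.trans hrs)

theorem ProdOneFreeUpTo.of_card (h : ProdOneFreeUpTo T.card T) : ProdOneFreeUpTo r T :=
  fun W hW hW0 _ ↦ h W hW hW0 (Multiset.card_le_card hW)

theorem ProdOneFreeUpTo.ne_one (h : ProdOneFreeUpTo r T) (hr : 1 ≤ r) (hx : x ∈ T) : x ≠ 1 := by
  simpa using h {x} (Multiset.singleton_le.2 hx) (by simp) (by simpa using hr)

theorem ProdOneFreeUpTo.mul_ne_one (h : ProdOneFreeUpTo r T) (hr : 2 ≤ r) (hxy : {x, y} ≤ T) :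
    x * y ≠ 1 := by
  simpa using h {x, y} hxy (by simp) (by simpa using hr)

/-- The set of products of the subsequences of `T` of length at most `r`, the empty one included;
in the literature, `{1} ∪ Σ_{≤ r}(T)`. -/
def shortProds [DecidableEq M] (r : ℕ) (T : Multiset M) : Finset M :=
  ((T.powerset.filter (·.card ≤ r)).map Multiset.prod).toFinset

variable [DecidableEq M]

theorem mem_shortProds : x ∈ shortProds r T ↔ ∃ W ≤ T, W.card ≤ r ∧ W.prod = x := by
  simp [shortProds, and_assoc]

theorem one_mem_shortProds : 1 ∈ shortProds r T :=
  mem_shortProds.2 ⟨0, Multiset.zero_le T, Nat.zero_le r, Multiset.prod_zero⟩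

theorem mem_shortProds_of_mem (hr : 1 ≤ r) (hx : x ∈ T) : x ∈ shortProds r T :=
  mem_shortProds.2 ⟨{x}, Multiset.singleton_le.2 hx, by simpa using hr, Multiset.prod_singleton x⟩

theorem mul_mem_shortProds (hr : 2 ≤ r) (hxy : {x, y} ≤ T) : x * y ∈ shortProds r T :=
  mem_shortProds.2 ⟨{x, y}, hxy, by simpa using hr, Multiset.prod_pair x y⟩

theorem card_toFinset_lt_card_shortProds (hr : 1 ≤ r) (h : ProdOneFreeUpTo r T) :
    #T.toFinset < #(shortProds r T) := by
  have h1 : 1 ∉ T.toFinset := fun h1 ↦ h.ne_one hr (Multiset.mem_toFinset.1 h1) rfl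
  rw [Nat.lt_iff_add_one_le, ← card_insert_of_notMem h1]
  exact card_le_card (insert_subset one_mem_shortProds fun x hx ↦
    mem_shortProds_of_mem hr (Multiset.mem_toFinset.1 hx))

end ProdOneFree

section ShortProducts

variable {G : Type*} [CommGroup G] [DecidableEq G] {T T₁ T₂ : Multiset G} {r s : ℕ} {x y : G}

theorem card_shortProds_add_card_shortProds_le (h : ProdOneFreeUpTo (r + s) (T₁ + T₂)) :
    #(shortProds r T₁) + #(shortProds s T₂) ≤ #(shortProds (r + s) (T₁ + T₂)) + 1 := by
  have hmul : shortProds r T₁ * shortProds s T₂ ⊆ shortProds (r + s) (T₁ + T₂) := by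
    intro x hx
    obtain ⟨a, ha, b, hb, rfl⟩ := mem_mul.1 hx
    obtain ⟨V, hV, hVr, rfl⟩ := mem_shortProds.1 ha
    obtain ⟨W, hW, hWs, rfl⟩ := mem_shortProds.1 hb
    exact mem_shortProds.2 ⟨V + W, add_le_add hV hW, by rw [Multiset.card_add]; omega,
      Multiset.prod_add V W⟩
  refine (card_add_card_le_card_mul_add_one one_mem_shortProds one_mem_shortProds ?_).trans
    (Nat.add_le_add_right (card_le_card hmul) 1)
  intro a ha b hb hab
  obtain ⟨V, hV, hVr, rfl⟩ := mem_shortProds.1 ha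
  obtain ⟨W, hW, hWs, rfl⟩ := mem_shortProds.1 hb
  have hVW : V + W = 0 := by_contra fun h0 ↦
    h (V + W) (add_le_add hV hW) h0 (by rw [Multiset.card_add]; omega)
      (by rwa [Multiset.prod_add])
  rw [(add_eq_zero.1 hVW).2, Multiset.prod_zero]

theorem card_lt_card_shortProds (hcount : ∀ x, T.count x ≤ r) (h : ProdOneFreeUpTo r T) :
    T.card < #(shortProds r T) := by
  induction r generalizing T with
  | zero =>
    obtain rfl : T = 0 := Multiset.eq_zero_of_forall_notMem fun x hx ↦
      (Multiset.count_pos.2 hx).not_ge (hcount x)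
    exact card_pos.2 ⟨1, one_mem_shortProds⟩
  | succ r ih =>
    have hsplit : T - T.dedup + T.dedup = T := tsub_add_cancel_of_le (Multiset.dedup_le T)
    have hrest : (T - T.dedup).card < #(shortProds r (T - T.dedup)) := by
      refine ih (fun x ↦ ?_) (h.mono r.le_succ tsub_le_self)
      have := hcount x
      rw [Multiset.count_sub, Multiset.count_dedup]
      split_ifs with hx
      · omega
      · rw [Multiset.count_eq_zero_of_notMem hx, zero_tsub]
        exact r.zero_le
    have hdedup : T.dedup.card < #(shortProds 1 T.dedup) := by
      simpa only [← Multiset.card_toFinset, Multiset.toFinset_dedup] using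
        card_toFinset_lt_card_shortProds le_rfl
        (h.mono (by omega) (Multiset.dedup_le T) : ProdOneFreeUpTo 1 T.dedup)
    have hsum := card_shortProds_add_card_shortProds_le (hsplit.symm ▸ h)
    have hcard := congrArg Multiset.card hsplit
    rw [hsplit] at hsum
    rw [Multiset.card_add] at hcard
    omega

theorem four_le_card_shortProds_pair (hxy : x ≠ y) (h : ProdOneFreeUpTo 2 {x, y}) :
    4 ≤ #(shortProds 2 {x, y}) := by
  have hx : x ∈ ({x, y} : Multiset G) := by simp
  have hy : y ∈ ({x, y} : Multiset G) := by simp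
  have hx1 := h.ne_one one_le_two hx
  have hy1 := h.ne_one one_le_two hy
  have hxy1 := h.mul_ne_one le_rfl (le_refl {x, y})
  have hsub : {1, x, y, x * y} ⊆ shortProds 2 {x, y} := by
    simp only [insert_subset_iff, singleton_subset_iff]
    exact ⟨one_mem_shortProds, mem_shortProds_of_mem one_le_two hx,
      mem_shortProds_of_mem one_le_two hy, mul_mem_shortProds le_rfl le_rfl⟩
  have hcard : #{1, x, y, x * y} = 4 := by
    rw [card_insert_of_notMem, card_insert_of_notMem, card_pair] <;> simp_all [eq_comm]
  exact hcard ▸ card_le_card hsub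

theorem card_add_three_le_card_shortProds_two {A : Finset G} (hA : 3 ≤ #A)
    (hsq : ∀ x ∈ A, x ^ 2 ≠ 1) (h : ProdOneFreeUpTo 2 A.val) :
    #A + 3 ≤ #(shortProds 2 A.val) := by
  refine card_add_three_le_card_of_mul_mem one_mem_shortProds
    (fun x hx ↦ mem_shortProds_of_mem one_le_two hx)
    (fun x hx y hy hxy ↦ mul_mem_shortProds le_rfl (pair_le_of_ne hx hy hxy))
    (fun x hx y hy ↦ ?_) hA
  obtain rfl | hxy := eq_or_ne x y
  · exact sq x ▸ hsq x hx
  · exact h.mul_ne_one le_rfl (pair_le_of_ne hx hy hxy)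

theorem card_filter_sq_ne_one_le_two [Fintype G] (hr : 2 ≤ r) (hcount : ∀ x, T.count x ≤ r)
    (h : ProdOneFreeUpTo (r + 1) T) (hT : Fintype.card G ≤ T.card + 2) :
    #{x ∈ T.toFinset | x ^ 2 ≠ 1} ≤ 2 := by
  set A := {x ∈ T.toFinset | x ^ 2 ≠ 1}
  by_contra! hA
  have hAT : A.val ≤ T := (Multiset.le_iff_subset A.nodup).2 fun x hx ↦
    Multiset.mem_toFinset.1 (mem_filter.1 hx).1
  have hsplit : T - A.val + A.val = T := tsub_add_cancel_of_le hAT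
  have hcount_rest (x : G) : (T - A.val).count x ≤ r - 1 := by
    rw [Multiset.count_sub]
    by_contra! hlt
    have hx2 : {x, x} ≤ T := Multiset.le_count_iff_replicate_le.1 (show 2 ≤ T.count x by omega)
    have hxA : x ∈ A := mem_filter.2 ⟨Multiset.mem_toFinset.2 (Multiset.mem_of_le hx2 (by simp)),
      sq x ▸ h.mul_ne_one (by omega) hx2⟩
    have := Multiset.count_eq_one_of_mem A.nodup hxA
    have := hcount x
    omega
  have hrest := card_lt_card_shortProds hcount_rest (h.mono (by omega) tsub_le_self)
  have hA3 := card_add_three_le_card_shortProds_two hA (fun x hx ↦ (mem_filter.1 hx).2)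
    (h.mono (by omega) hAT)
  have hsum := card_shortProds_add_card_shortProds_le (r := r - 1) (s := 2)
    (T₁ := T - A.val) (T₂ := A.val) (by rw [hsplit]; exact h.mono (by omega) le_rfl)
  have hcard := congrArg Multiset.card hsplit
  have hG := card_le_univ (shortProds (r - 1 + 2) (T - A.val + A.val))
  rw [Multiset.card_add, card_val] at hcard
  omega

end ShortProducts

section Pairs

variable {G : Type*} [CommGroup G] [Fintype G] {T : Multiset G} {x y z w : G}

theorem card_add_three_le_of_pair_add_pair_le (hxy : x ≠ y) (hzw : z ≠ w)
    (hT : {x, y} + {z, w} ≤ T) (h : ProdOneFreeUpTo T.card T) : T.card + 3 ≤ Fintype.card G := by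
  classical
  obtain ⟨R, rfl⟩ := Multiset.le_iff_exists_add.1 hT
  have hcard : ({x, y} + {z, w} + R : Multiset G).card = 2 + 2 + R.card := by
    simp only [Multiset.card_add, Multiset.card_pair]
  rw [hcard] at h ⊢
  have hpairs := card_shortProds_add_card_shortProds_le
    (h.mono (by omega) (Multiset.le_add_right _ R) : ProdOneFreeUpTo (2 + 2) ({x, y} + {z, w}))
  have htotal := card_shortProds_add_card_shortProds_le h
  have hxy4 := four_le_card_shortProds_pair hxy
    (h.mono (by omega) ((Multiset.le_add_right _ _).trans (Multiset.le_add_right _ R)))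
  have hzw4 := four_le_card_shortProds_pair hzw
    (h.mono (by omega) ((Multiset.le_add_left _ _).trans (Multiset.le_add_right _ R)))
  have hR := card_lt_card_shortProds (fun x ↦ Multiset.count_le_card x R)
    (h.mono (by omega) (Multiset.le_add_left R _))
  have hG := card_le_univ (shortProds (2 + 2 + R.card) ({x, y} + {z, w} + R))
  omega

theorem card_le_count_add_one_of_two_le_count [DecidableEq G]
    (hT : Fintype.card G ≤ T.card + 2) (h : ProdOneFreeUpTo T.card T) (hx : 2 ≤ T.count x) :
    T.card ≤ T.count x + 1 := by
  by_contra! hlt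
  have hsplit := replicate_count_add_filter_ne T x
  have hcard := congrArg Multiset.card hsplit
  rw [Multiset.card_add, Multiset.card_replicate] at hcard
  obtain ⟨W, hW, hW2⟩ := exists_le_card_eq (show 2 ≤ (T.filter (· ≠ x)).card by omega)
  obtain ⟨y, z, rfl⟩ := Multiset.card_eq_two.1 hW2
  have hy : y ≠ x :=
    (Multiset.mem_filter.1 (Multiset.mem_of_le hW (show y ∈ {y, z} by simp))).2
  have hz : z ≠ x :=
    (Multiset.mem_filter.1 (Multiset.mem_of_le hW (show z ∈ {y, z} by simp))).2
  have hpairs : {x, y} + {x, z} ≤ T := calc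
    {x, y} + {x, z} = Multiset.replicate 2 x + {y, z} := add_add_add_comm {x} {y} {x} {z}
    _ ≤ Multiset.replicate (T.count x) x + T.filter (· ≠ x) :=
      add_le_add ((Multiset.replicate_le_replicate x).2 hx) hW
    _ = T := hsplit
  have := card_add_three_le_of_pair_add_pair_le hy.symm hz.symm hpairs h
  omega

end Pairs

section Cyclic

variable {G : Type*} [CommGroup G] [DecidableEq G] [IsCyclic G] {T : Multiset G} {r s : ℕ}

theorem card_filter_sq_eq_one_le_one [Finite G] (h : ProdOneFreeUpTo 2 T) :
    (T.filter (· ^ 2 = 1)).card ≤ 1 := by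
  cases nonempty_fintype G
  by_contra! hlt
  obtain ⟨W, hW, hW2⟩ := exists_le_card_eq hlt
  obtain ⟨x, y, rfl⟩ := Multiset.card_eq_two.1 hW2
  have hxy1 := h.mul_ne_one le_rfl (hW.trans (Multiset.filter_le _ T))
  obtain ⟨hxT, hx2⟩ := Multiset.mem_filter.1 (Multiset.mem_of_le hW (show x ∈ {x, y} by simp))
  obtain ⟨hyT, hy2⟩ := Multiset.mem_filter.1 (Multiset.mem_of_le hW (show y ∈ {x, y} by simp))
  have hxy : x ≠ y := fun hxy ↦ hxy1 (by rw [← hxy, ← sq, hx2])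
  have hroots : {1, x, y} ⊆ ({z | z ^ 2 = 1} : Finset G) := by
    simp [insert_subset_iff, hx2, hy2]
  have hthree : #{1, x, y} = 3 :=
    card_eq_three.2 ⟨1, x, y, (h.ne_one one_le_two hxT).symm, (h.ne_one one_le_two hyT).symm, hxy,
      rfl⟩
  have := (card_le_card hroots).trans (IsCyclic.card_pow_eq_one_le two_pos)
  omega

variable [Fintype G]

theorem card_le_two_mul_of_count_le (hr : 2 ≤ r) (hsr : s ≤ r) (hcount : ∀ x, T.count x ≤ s)
    (h : ProdOneFreeUpTo (r + 1) T) (hT : T.card + 2 = Fintype.card G) : T.card ≤ 2 * s := by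
  have hne : (T.filter (· ^ 2 ≠ 1)).card ≤ 2 * s := by
    refine (card_le_card_toFinset_mul fun x ↦
      (Multiset.count_le_of_le x (Multiset.filter_le _ T)).trans (hcount x)).trans
      (Nat.mul_le_mul_right s ?_)
    rw [Multiset.toFinset_filter]
    exact card_filter_sq_ne_one_le_two hr (fun x ↦ (hcount x).trans hsr) h hT.ge
  have heq := card_filter_sq_eq_one_le_one (h.mono (by omega) le_rfl)
  have hsplit : (T.filter (· ^ 2 = 1)).card + (T.filter (· ^ 2 ≠ 1)).card = T.card := by
    rw [← Multiset.card_add, Multiset.filter_add_not]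
  obtain hzero | ⟨x, hx⟩ := (T.filter (· ^ 2 = 1)).empty_or_exists_mem
  · rw [hzero, Multiset.card_zero] at hsplit
    omega
  · obtain ⟨hxT, hx2⟩ := Multiset.mem_filter.1 hx
    have heven : 2 ∣ Fintype.card G :=
      orderOf_eq_prime hx2 (h.ne_one (by omega) hxT) ▸ orderOf_dvd_card
    omega

theorem exists_sq_ne_one_card_le_count_add_one (hG : 4 ≤ Fintype.card G)
    (hT : T.card + 2 = Fintype.card G) (h : ProdOneFreeUpTo T.card T) :
    ∃ x ∈ T, x ^ 2 ≠ 1 ∧ T.card ≤ T.count x + 1 := by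
  obtain ⟨x, hx, hmax⟩ := exists_max_image T.toFinset (T.count ·)
    (Multiset.toFinset_nonempty.2 (Multiset.card_pos.1 (by omega)))
  rw [Multiset.mem_toFinset] at hx
  obtain hx1 | hx2 := le_or_gt (T.count x) 1
  · have hcount (y : G) : T.count y ≤ 1 := by
      by_cases hy : y ∈ T
      · exact (hmax y (Multiset.mem_toFinset.2 hy)).trans hx1
      · simp [hy]
    have hT2 := card_le_two_mul_of_count_le le_rfl one_le_two hcount h.of_card hT
    obtain ⟨y, hy, hy2⟩ : ∃ y ∈ T, y ^ 2 ≠ 1 := by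
      by_contra! hall
      have := card_filter_sq_eq_one_le_one h.of_card
      rw [Multiset.filter_eq_self.2 hall] at this
      omega
    have := Multiset.one_le_count_iff_mem.2 hy
    exact ⟨y, hy, hy2, by omega⟩
  · have hxx : {x, x} ≤ T := Multiset.le_count_iff_replicate_le.1 hx2
    exact ⟨x, hx, sq x ▸ h.of_card.mul_ne_one le_rfl hxx,
      card_le_count_add_one_of_two_le_count hT.ge h hx2⟩

end Cyclic

theorem exists_pow_eq_of_orderOf_eq_card {G : Type*} [Group G] [Fintype G] {g : G}
    (hg : orderOf g = Fintype.card G) (x : G) :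
    ∃ i < Fintype.card G, g ^ i = x := by
  classical
  have htop : Subgroup.zpowers g = ⊤ :=
    Subgroup.eq_top_of_card_eq _ (by rw [Nat.card_zpowers, hg, Nat.card_eq_fintype_card])
  have hx : x ∈ Subgroup.zpowers g := htop ▸ Subgroup.mem_top x
  simpa [hg] using mem_zpowers_iff_mem_range_orderOf.1 hx

section Structure

variable {G : Type*} [CommGroup G] {T : Multiset G} {x g : G}

theorem ProdOneFreeUpTo.count_lt_orderOf [Finite G] [DecidableEq G]
    (h : ProdOneFreeUpTo T.card T) : T.count x < orderOf x := by
  by_contra! hle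
  refine h (Multiset.replicate (orderOf x) x) (Multiset.le_count_iff_replicate_le.1 hle) ?_ ?_
    (by rw [Multiset.prod_replicate, pow_orderOf_eq_one])
  · rw [← Multiset.card_pos, Multiset.card_replicate]
    exact orderOf_pos x
  · rw [Multiset.card_replicate]
    exact hle.trans (Multiset.count_le_card x T)

theorem orderOf_eq_card_of_card_le_count_add_one [Fintype G] [DecidableEq G]
    (hT : T.card + 2 = Fintype.card G) (h : ProdOneFreeUpTo T.card T) (hx : x ∈ T)
    (hx2 : x ^ 2 ≠ 1) (hcount : T.card ≤ T.count x + 1) : orderOf x = Fintype.card G := by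
  have hlt := h.count_lt_orderOf (x := x)
  have hpos := Multiset.count_pos.2 hx
  have hne2 : orderOf x ≠ 2 := fun h2 ↦ hx2 (h2 ▸ pow_orderOf_eq_one x)
  obtain ⟨c, hc⟩ := orderOf_dvd_card (x := x)
  have hc1 : c < 2 := by
    by_contra! hc2
    have := Nat.mul_le_mul_left (orderOf x) hc2
    omega
  interval_cases c <;> omega

theorem eq_replicate_add_singleton_of_orderOf_eq_card [Fintype G] [DecidableEq G]
    (hG : 3 ≤ Fintype.card G) (hT : T.card + 2 = Fintype.card G)
    (h : ProdOneFreeUpTo T.card T) (hg : orderOf g = Fintype.card G)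
    (hcount : T.card ≤ T.count g + 1) :
    ∃ j, (j = 1 ∨ j = 2) ∧ T = Multiset.replicate (Fintype.card G - 3) g + {g ^ j} := by
  obtain ⟨R, hR⟩ := Multiset.le_iff_exists_add.1 (Multiset.le_count_iff_replicate_le.1
    (show Fintype.card G - 3 ≤ T.count g by omega))
  have hR1 : R.card = 1 := by
    have := congrArg Multiset.card hR
    rw [Multiset.card_add, Multiset.card_replicate] at this
    omega
  obtain ⟨y, rfl⟩ := Multiset.card_eq_one.1 hR1
  obtain ⟨j, hj, rfl⟩ := exists_pow_eq_of_orderOf_eq_card hg y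
  refine ⟨j, ?_, hR⟩
  have hj0 : j ≠ 0 := by
    rintro rfl
    exact h.ne_one (by omega) (hR ▸ Multiset.mem_add.2 (Or.inr (Multiset.mem_singleton_self _)))
      (pow_zero g)
  by_contra! hj12
  refine h.of_card (r := Fintype.card G) (Multiset.replicate (Fintype.card G - j) g + {g ^ j}) ?_
    (by simp) ?_ ?_
  · rw [hR]
    exact add_le_add_left ((Multiset.replicate_le_replicate g).2 (by omega)) _
  · rw [Multiset.card_add, Multiset.card_replicate, Multiset.card_singleton]
    omega
  · rw [Multiset.prod_add, Multiset.prod_replicate, Multiset.prod_singleton, ← pow_add,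
      Nat.sub_add_cancel hj.le, ← hg, pow_orderOf_eq_one]

theorem ProdOneFreeUpTo.exists_eq_replicate_add_singleton [Fintype G] [IsCyclic G]
    (hG : 4 ≤ Fintype.card G) (hT : T.card + 2 = Fintype.card G)
    (h : ProdOneFreeUpTo T.card T) :
    ∃ (g : G) (j : ℕ), orderOf g = Fintype.card G ∧ (j = 1 ∨ j = 2) ∧
      T = Multiset.replicate (Fintype.card G - 3) g + {g ^ j} := by
  classical
  obtain ⟨g, hgT, hg2, hcount⟩ := exists_sq_ne_one_card_le_count_add_one hG hT h
  have hg := orderOf_eq_card_of_card_le_count_add_one hT h hgT hg2 hcount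
  obtain ⟨j, hj, hTj⟩ := eq_replicate_add_singleton_of_orderOf_eq_card (by omega) hT h hg hcount
  exact ⟨g, j, hg, hj, hTj⟩

end Structure

section NoLongProdOne

variable {M : Type*} [CommMonoid M] {N : Multiset M} {n h : ℕ}

/-- `N` has no product-one subsequence whose length lies between `n - h` and `n`; equivalently,
prefixing `N` with `h` copies of the identity creates no product-one subsequence of length `n`. -/
def NoLongProdOne (n h : ℕ) (N : Multiset M) : Prop :=
  ∀ W ≤ N, W.prod = 1 → W.card ≤ n → W.card + h < n

theorem NoLongProdOne.exists_prodOneFreeUpTo_le (hN : NoLongProdOne n h N)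
    (hcard : 2 * n ≤ h + N.card + 3) (hh : 1 ≤ h) :
    ∃ T ≤ N, T.card + 2 = n ∧ ProdOneFreeUpTo (h + 1) T := by
  classical
  have hfinite : {U | U ≤ N ∧ U.prod = 1 ∧ U.card ≤ n}.Finite :=
    (Set.finite_Iic N).subset fun _ hU ↦ hU.1
  obtain ⟨U, ⟨hUN, hU1, hUn⟩, hmax⟩ := hfinite.exists_maximal
    ⟨0, Multiset.zero_le N, Multiset.prod_zero, n.zero_le⟩
  have hUh := hN U hUN hU1 hUn
  have hfree : ProdOneFreeUpTo (h + 1) (N - U) := by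
    intro W hW hW0 hWh hW1
    have hle : U + W ≤ U :=
      hmax ⟨(add_le_add_right hW U).trans_eq (add_tsub_cancel_of_le hUN),
        by rw [Multiset.prod_add, hU1, hW1, mul_one], by rw [Multiset.card_add]; omega⟩
        (Multiset.le_add_right U W)
    have hWpos := Multiset.card_pos.2 hW0
    have := Multiset.card_le_card hle
    rw [Multiset.card_add] at this
    omega
  have hsub : n - 2 ≤ (N - U).card := by
    rw [Multiset.card_sub hUN]
    omega
  obtain ⟨T, hT, hTcard⟩ := exists_le_card_eq hsub
  refine ⟨T, hT.trans tsub_le_self, ?_, hfree.mono le_rfl hT⟩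
  omega

end NoLongProdOne

section Leftover

variable {G : Type*} [CommGroup G] [DecidableEq G] {N X : Multiset G} {n h j : ℕ} {g x : G}

theorem NoLongProdOne.exists_prodOneFree_le [Fintype G] [IsCyclic G]
    (hN : NoLongProdOne (Fintype.card G) h N) (hcard : 2 * Fintype.card G ≤ h + N.card + 3)
    (hcount : ∀ x, N.count x ≤ h) (hh : 2 ≤ h) :
    ∃ T ≤ N, T.card + 2 = Fintype.card G ∧ ProdOneFreeUpTo T.card T := by
  obtain ⟨T, hTN, hTcard, hfree⟩ := hN.exists_prodOneFreeUpTo_le hcard (by omega)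
  refine ⟨T, hTN, hTcard, fun W hW hW0 _ hW1 ↦ ?_⟩
  have hTh := card_le_two_mul_of_count_le hh le_rfl
    (fun x ↦ (Multiset.count_le_of_le x hTN).trans (hcount x)) hfree hTcard
  have hWh : ¬ W.card ≤ h + 1 := fun hWh ↦ hfree W hW hW0 hWh hW1
  have hlong := hN W (hW.trans hTN) hW1 (by have := Multiset.card_le_card hW; omega)
  omega

theorem NoLongProdOne.eq_pow_sub_one_of_mem
    (hN : NoLongProdOne n h (Multiset.replicate (n - 3) g + {g ^ j} + X))
    (hone : x ≠ 1) (hg : orderOf g = n) (hj : j = 1 ∨ j = 2) (hh : 2 ≤ h) (hhn : h + 2 ≤ n)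
    (hcount : (Multiset.replicate (n - 3) g + {g ^ j} + X).count g ≤ h)
    (hX : x ∈ X) (hxg : ∃ i < n, g ^ i = x) : x = g ^ (n - 1) ∧ h + 3 = n := by
  obtain ⟨i, hi, rfl⟩ := hxg
  have hi0 : i ≠ 0 := by
    rintro rfl
    exact hone (pow_zero g)
  simp only [Multiset.count_add, Multiset.count_replicate_self] at hcount
  obtain hi3 | hi2 := le_or_gt 3 i
  · have hW : Multiset.replicate (n - i) g + {g ^ i} ≤
        Multiset.replicate (n - 3) g + {g ^ j} + X :=
      add_le_add (((Multiset.replicate_le_replicate g).2 (by omega)).trans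
        (Multiset.le_add_right _ _)) (Multiset.singleton_le.2 hX)
    have hlong := hN _ hW (by
      rw [Multiset.prod_add, Multiset.prod_replicate, Multiset.prod_singleton, ← pow_add,
        Nat.sub_add_cancel hi.le, ← hg, pow_orderOf_eq_one])
    simp only [Multiset.card_add, Multiset.card_replicate, Multiset.card_singleton] at hlong
    exact ⟨congrArg (g ^ ·) (by omega), by omega⟩
  exfalso
  obtain hij | hij := le_or_gt 3 (i + j)
  · have hW : Multiset.replicate (n - (i + j)) g + {g ^ j} + {g ^ i} ≤
        Multiset.replicate (n - 3) g + {g ^ j} + X :=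
      add_le_add (add_le_add_left ((Multiset.replicate_le_replicate g).2 (by omega)) _)
        (Multiset.singleton_le.2 hX)
    have hlong := hN _ hW (by
      rw [Multiset.prod_add, Multiset.prod_add, Multiset.prod_replicate, Multiset.prod_singleton,
        Multiset.prod_singleton, mul_assoc, ← pow_add, ← pow_add, add_comm j i,
        Nat.sub_add_cancel (by omega), ← hg, pow_orderOf_eq_one])
    simp only [Multiset.card_add, Multiset.card_replicate, Multiset.card_singleton] at hlong
    omega
  · obtain ⟨rfl, rfl⟩ : i = 1 ∧ j = 1 := by omega
    have := Multiset.one_le_count_iff_mem.2 hX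
    simp only [pow_one, Multiset.count_singleton_self] at hcount this
    omega

theorem NoLongProdOne.eq_zero_of_count_le
    (hN : NoLongProdOne n h (Multiset.replicate (n - 3) g + {g ^ j} + X))
    (hcard : h + X.card + 1 = n) (hone : 1 ∉ X) (hg : orderOf g = n) (hj : j = 1 ∨ j = 2)
    (hh : 2 ≤ h) (hcount : (Multiset.replicate (n - 3) g + {g ^ j} + X).count g ≤ h)
    (hgen : ∀ x, ∃ i < n, g ^ i = x) : X = 0 := by
  by_contra hX0
  have hXpos := Multiset.card_pos.2 hX0
  have hX : ∀ x ∈ X, x = g ^ (n - 1) ∧ h + 3 = n := fun x hx ↦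
    hN.eq_pow_sub_one_of_mem (fun hx1 ↦ hone (hx1 ▸ hx)) hg hj hh (by omega) hcount hx
      (hgen x)
  have hhn : h + 3 = n := by
    obtain ⟨x, hx⟩ := Multiset.exists_mem_of_ne_zero hX0
    exact (hX x hx).2
  obtain rfl | rfl := hj
  · simp only [pow_one, Multiset.count_add, Multiset.count_replicate_self,
      Multiset.count_singleton_self] at hcount
    omega
  · have hXrep : X = Multiset.replicate 2 (g ^ (n - 1)) :=
      Multiset.eq_replicate.2 ⟨by omega, fun x hx ↦ (hX x hx).1⟩
    have hW : {g ^ 2} + X ≤ Multiset.replicate (n - 3) g + {g ^ 2} + X :=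
      add_le_add_left (Multiset.le_add_left _ _) X
    have hlong := hN _ hW (by
      rw [hXrep, Multiset.prod_add, Multiset.prod_singleton, Multiset.prod_replicate, ← mul_pow,
        ← pow_succ', Nat.sub_add_cancel (by omega), ← hg, pow_orderOf_eq_one, one_pow])
    rw [Multiset.card_add, Multiset.card_singleton] at hlong
    omega

theorem NoLongProdOne.exists_eq_replicate_add_singleton [Fintype G] [IsCyclic G]
    (hG : 4 ≤ Fintype.card G) (hN : NoLongProdOne (Fintype.card G) h N)
    (hcard : h + N.card + 3 = 2 * Fintype.card G) (hone : 1 ∉ N) (hcount : ∀ x, N.count x ≤ h) :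
    h + 1 = Fintype.card G ∧ ∃ (g : G) (j : ℕ), orderOf g = Fintype.card G ∧ (j = 1 ∨ j = 2) ∧
      N = Multiset.replicate (Fintype.card G - 3) g + {g ^ j} := by
  have hh := two_le_of_count_le hG hcard hone hcount
  obtain ⟨T, hTN, hTcard, hfree⟩ := hN.exists_prodOneFree_le hcard.ge hcount hh
  obtain ⟨g, j, hg, hj, rfl⟩ := hfree.exists_eq_replicate_add_singleton hG hTcard
  obtain ⟨X, rfl⟩ := Multiset.le_iff_exists_add.1 hTN
  rw [Multiset.card_add] at hcard
  have hXcard : h + X.card + 1 = Fintype.card G := by omega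
  obtain rfl : X = 0 := hN.eq_zero_of_count_le hXcard
    (fun hX ↦ hone (Multiset.mem_add.2 (Or.inr hX))) hg hj hh (hcount g)
    (exists_pow_eq_of_orderOf_eq_card hg)
  exact ⟨hXcard, g, j, hg, hj, add_zero _⟩

end Leftover

section Translation

variable {G : Type*}

theorem isProdOne_of_prod_eq_one [CommGroup G] {T : Multiset G} (hT : T.prod = 1) : IsProdOne T :=
  ⟨T.toList, T.coe_toList, by rw [Multiset.prod_toList, hT]⟩

theorem exists_eq_replicate_add_map_mul_right [Group G] [DecidableEq G] {S : Multiset G}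
    (hS : S ≠ 0) : ∃ (a : G) (h : ℕ) (N : Multiset G),
      S = Multiset.replicate h a + N.map (· * a) ∧ 1 ∉ N ∧ ∀ x, N.count x ≤ h := by
  obtain ⟨a, -, hmax⟩ := exists_max_image S.toFinset (S.count ·) (Multiset.toFinset_nonempty.2 hS)
  refine ⟨a, S.count a, (S.filter (· ≠ a)).map (· * a⁻¹), ?_, ?_, fun x ↦ ?_⟩
  · simp only [Multiset.map_map, Function.comp_apply, inv_mul_cancel_right, Multiset.map_id']
    exact (replicate_count_add_filter_ne S a).symm
  · simp [mul_inv_eq_one]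
  · calc ((S.filter (· ≠ a)).map (· * a⁻¹)).count x
        = ((S.filter (· ≠ a)).map (· * a⁻¹)).count (x * a * a⁻¹) := by rw [mul_inv_cancel_right]
      _ = (S.filter (· ≠ a)).count (x * a) :=
        Multiset.count_map_eq_count' _ _ (mul_left_injective a⁻¹) _
      _ ≤ S.count (x * a) := Multiset.count_le_of_le _ (Multiset.filter_le _ S)
      _ ≤ S.count a := by
        by_cases hx : x * a ∈ S
        · exact hmax _ (Multiset.mem_toFinset.2 hx)
        · rw [Multiset.count_eq_zero_of_notMem hx]
          exact Nat.zero_le _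

theorem noLongProdOne_of_not_hasProdOneSubseqOfLen [CommGroup G] [Fintype G] {N : Multiset G}
    {h : ℕ} {a : G}
    (hno : ¬ HasProdOneSubseqOfLen (Multiset.replicate h a + N.map (· * a)) (Fintype.card G)) :
    NoLongProdOne (Fintype.card G) h N := by
  intro W hW hW1 hWn
  by_contra! hlong
  refine hno ⟨Multiset.replicate (Fintype.card G - W.card) a + W.map (· * a),
    add_le_add ((Multiset.replicate_le_replicate a).2 (by omega)) (Multiset.map_le_map hW), ?_,
    isProdOne_of_prod_eq_one ?_⟩
  · rw [Multiset.card_add, Multiset.card_replicate, Multiset.card_map, Nat.sub_add_cancel hWn]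
  · rw [Multiset.prod_add, Multiset.prod_replicate, Multiset.prod_map_mul, Multiset.map_id', hW1,
      one_mul, Multiset.map_const', Multiset.prod_replicate, ← pow_add, Nat.sub_add_cancel hWn,
      pow_card_eq_one]

end Translation

/-- If `G` is cyclic of order `n ≥ 4` and `S` is a sequence of length `2n - 3`
over `G` with no product-one subsequence of length `n`, then
`S = a^[n-1] · b^[n-2]` or `S = a^[n-1] · b^[n-3] · (b²a⁻¹)`, where
`ord(ab⁻¹) = n`. -/
theorem inverse_two_n_sub_three (G : Type*) [Group G] [Fintype G]
    (hG : IsCyclic G) (n : ℕ) (hn : 4 ≤ n) (hcard : Fintype.card G = n)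
    (S : Multiset G) (hS : Multiset.card S = 2 * n - 3)
    (hno : ¬ HasProdOneSubseqOfLen S n) :
    ∃ a b : G, orderOf (a * b⁻¹) = n ∧
      (S = Multiset.replicate (n - 1) a + Multiset.replicate (n - 2) b ∨
       S = Multiset.replicate (n - 1) a + Multiset.replicate (n - 3) b +
            {b ^ 2 * a⁻¹}) := by
  classical
  let _ : CommGroup G := IsCyclic.commGroup
  subst hcard
  obtain ⟨a, h, N, rfl, hone, hcount⟩ :=
    exists_eq_replicate_add_map_mul_right (Multiset.card_pos.1 (by omega : 0 < S.card))
  rw [Multiset.card_add, Multiset.card_replicate, Multiset.card_map] at hS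
  obtain ⟨hh, g, j, hg, hj, rfl⟩ :=
    (noLongProdOne_of_not_hasProdOneSubseqOfLen hno).exists_eq_replicate_add_singleton hn
      (by omega) hone hcount
  obtain rfl : h = Fintype.card G - 1 := by omega
  refine ⟨a, g * a, by rw [mul_inv_rev, mul_inv_cancel_left, orderOf_inv, hg], ?_⟩
  rw [Multiset.map_add, Multiset.map_replicate, Multiset.map_singleton]
  obtain rfl | rfl := hj
  · left
    rw [pow_one, ← Multiset.replicate_one (g * a), ← Multiset.replicate_add]
    congr 2
    omega
  · right
    rw [← add_assoc, mul_pow, sq a, ← mul_assoc, mul_inv_cancel_right]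
end

section
/- For the dihedral group D_{2m} of order 2m (m ≥ 2), E(D_{2m}) = 3m, where E(G) is the smallest integer t such that every sequence of t elements of G has a product-one subsequence of length |G|. -/
/-!
Write a sequence over `D_{2m}` as rotations `r i`, `i ∈ R`, and reflections `sr i`, `i ∈ F`.
It has product one in some order as soon as `F` is nonempty and `(R, F)` is *balanced*, i.e. both
can be split, `R = U + V` and `F = B + B'` with `|B| = |B'|`, so that `∑ U - ∑ V = ∑ B - ∑ B'`.

Suppose `|R| + |F| ≥ 3m`. If `F` has a repeated term `b`, then `(0, {b, b})` is balanced, and it is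
padded to length `2m` with repeated terms of `R` or `F` and with coincidences `x - b = x' - b'`,
which the pigeonhole principle supplies. If the terms of `F` are distinct, there are two cases.
Either all but few terms of `R` lie in one coset of a subgroup `K`, and the Erdős–Ginzburg–Ziv
theorem in `K` yields `2m` rotations with product one; or `R` contains few disjoint pairs whose
sumset has more than `m - |F| + 1` elements, so that choosing one term from each pair lets
`∑ U - ∑ V` take one of the `|F| - 1` values `b - b'` with `b' ∈ F` fixed.

The dichotomy comes from a family of pairs whose sumset is as large as possible and, among these,
with as many pairs as possible crossing cosets of the stabilizer `L` of the sumset. A repeated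
leftover term `z` may be paired with any other leftover term, or used to break a pair `{y, w}` into
`{y, z}` and `{w, z}`, whose sumset contains `z + {y, w}`. Maximality therefore puts all leftover
terms, and a term of every pair, in `z + L`, so that no more than `c` terms of `R` lie outside
`z + L`, where `c` is the number of crossing pairs. Finally the sumset has at least `|L| + c`
elements, because adjoining a crossing pair enlarges a union of cosets of `L`.

For the lower bound take `2m - 1` copies of `1`, `m - 1` of `r 1` and a single reflection: the
reflection is excluded by the sign `-1` of reflections, then `r 1` by its order `m`.
-/

section Multiset

variable {α : Type*}

theorem card_le_natCard_of_nodup [Finite α] {S : Multiset α} (hS : S.Nodup) :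
    S.card ≤ Nat.card α := by
  classical
  have := Fintype.ofFinite α
  rw [← Multiset.toFinset_card_of_nodup hS, Nat.card_eq_fintype_card]
  exact S.toFinset.card_le_univ

theorem exists_le_card_eq_s17 {S : Multiset α} {n : ℕ} (hn : n ≤ S.card) : ∃ T ≤ S, T.card = n := by
  have hpos : 0 < (S.powersetCard n).card := by
    rw [Multiset.card_powersetCard]
    exact Nat.choose_pos hn
  obtain ⟨T, hT⟩ := Multiset.card_pos_iff_exists_mem.1 hpos
  exact ⟨T, Multiset.mem_powersetCard.1 hT⟩

theorem pair_le_of_mem_of_ne {S : Multiset α} {a b : α} (ha : a ∈ S) (hb : b ∈ S)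
    (hab : a ≠ b) : {a, b} ≤ S := by
  refine (Multiset.le_iff_subset ?_).2 ?_
  · simpa using hab
  · simp [Multiset.subset_iff, ha, hb]

/-- The multiset of all entries of the pairs in `P`. -/
def pairTerms (P : Multiset (α × α)) : Multiset α :=
  P.map Prod.fst + P.map Prod.snd

theorem pairTerms_cons (p : α × α) (P : Multiset (α × α)) :
    pairTerms (p ::ₘ P) = p.1 ::ₘ p.2 ::ₘ pairTerms P := by
  simp only [pairTerms, Multiset.map_cons, Multiset.cons_add, Multiset.add_cons,
    Multiset.cons_swap]

theorem card_pairTerms (P : Multiset (α × α)) : (pairTerms P).card = 2 * P.card := by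
  simp only [pairTerms, Multiset.card_add, Multiset.card_map, two_mul]

end Multiset

section PairSumset

open AddAction
open scoped Pointwise

variable {G : Type*} [AddCommGroup G]

open scoped Classical in
/-- The number of pairs of `P` whose two entries lie in different cosets of `H`. -/
noncomputable def crossingNumber (H : AddSubgroup G) (P : Multiset (G × G)) : ℕ :=
  P.countP fun p ↦ p.1 - p.2 ∉ H

open scoped Classical in
/-- The number of terms of `R` outside the coset `c + H`. -/
noncomputable def outsideCount (H : AddSubgroup G) (c : G) (R : Multiset G) : ℕ :=
  R.countP fun x ↦ x - c ∉ H

theorem outsideCount_add (H : AddSubgroup G) (c : G) (R S : Multiset G) :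
    outsideCount H c (R + S) = outsideCount H c R + outsideCount H c S := by
  classical exact Multiset.countP_add _ _ _

theorem crossingNumber_le_card (H : AddSubgroup G) (P : Multiset (G × G)) :
    crossingNumber H P ≤ P.card := by
  classical exact Multiset.countP_le_card _ _

theorem crossingNumber_cons_of_mem {H : AddSubgroup G} {p : G × G} (hp : p.1 - p.2 ∈ H)
    (P : Multiset (G × G)) :
    crossingNumber H (p ::ₘ P) = crossingNumber H P := by
  classical exact Multiset.countP_cons_of_neg _ (not_not.2 hp)

theorem crossingNumber_cons_of_notMem {H : AddSubgroup G} {p : G × G} (hp : p.1 - p.2 ∉ H)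
    (P : Multiset (G × G)) :
    crossingNumber H (p ::ₘ P) = crossingNumber H P + 1 := by
  classical exact Multiset.countP_cons_of_pos _ hp

theorem outsideCount_pairTerms_le (H : AddSubgroup G) {z : G} {P : Multiset (G × G)}
    (hP : ∀ p ∈ P, p.1 - z ∈ H ∨ p.2 - z ∈ H) :
    outsideCount H z (pairTerms P) ≤ crossingNumber H P := by
  classical
  induction P using Multiset.induction with
  | empty => simp [pairTerms, outsideCount]
  | cons p P ih =>
    have hrest := ih fun q hq ↦ hP q (Multiset.mem_cons_of_mem hq)
    have hp := hP p (Multiset.mem_cons_self p P)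
    have hcross : p.1 - p.2 ∈ H → (p.1 - z ∈ H ↔ p.2 - z ∈ H) := by
      intro h
      rw [← sub_add_sub_cancel p.1 p.2 z]
      exact H.add_mem_cancel_left h
    simp only [pairTerms_cons, outsideCount, crossingNumber, Multiset.countP_cons] at hrest ⊢
    grind

variable [DecidableEq G]

theorem stabilizer_le_stabilizer_add (X Y : Finset G) :
    stabilizer G X ≤ stabilizer G (X + Y) := by
  intro g hg
  rw [mem_stabilizer_iff] at hg ⊢
  rw [← vadd_add_assoc, hg]

theorem pair_add_eq_vadd_of_card_le {x y : G} {X : Finset G}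
    (h : (({x, y} : Finset G) + X).card ≤ X.card) {a : G} (ha : a ∈ ({x, y} : Finset G)) :
    {x, y} + X = a +ᵥ X := by
  refine (Finset.eq_of_subset_of_card_le (Finset.vadd_finset_subset_vadd ha) ?_).symm
  rwa [Finset.card_vadd_finset]

theorem sub_mem_stabilizer_of_card_pair_add_le {x y : G} {X : Finset G}
    (h : (({x, y} : Finset G) + X).card ≤ X.card) : x - y ∈ stabilizer G X := by
  have hxy : x +ᵥ X = y +ᵥ X := by
    rw [← pair_add_eq_vadd_of_card_le h (by simp : x ∈ _),
      ← pair_add_eq_vadd_of_card_le h (by simp : y ∈ _)]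
  rw [mem_stabilizer_iff, sub_eq_neg_add, add_vadd, hxy, neg_vadd_vadd]

/-- The set of all sums obtained by choosing one entry from each pair of `P`, that is, the sumset
of the sets `{p.1, p.2}`. -/
def pairSumset (P : Multiset (G × G)) : Finset G :=
  (P.map fun p ↦ {p.1, p.2}).sum

@[simp]
theorem pairSumset_zero : pairSumset (0 : Multiset (G × G)) = 0 := rfl

theorem pairSumset_cons (p : G × G) (P : Multiset (G × G)) :
    pairSumset (p ::ₘ P) = {p.1, p.2} + pairSumset P := by
  simp only [pairSumset, Multiset.map_cons, Multiset.sum_cons]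

theorem pairSumset_add (P Q : Multiset (G × G)) :
    pairSumset (P + Q) = pairSumset P + pairSumset Q := by
  simp only [pairSumset, Multiset.map_add, Multiset.sum_add]

theorem pairSumset_nonempty (P : Multiset (G × G)) : (pairSumset P).Nonempty := by
  induction P using Multiset.induction with
  | empty => exact Finset.zero_nonempty
  | cons p P ih => rw [pairSumset_cons]; exact (Finset.insert_nonempty _ _).add ih

theorem exists_le_pairTerms_of_mem_pairSumset {P : Multiset (G × G)} {v : G}
    (hv : v ∈ pairSumset P) : ∃ A ≤ pairTerms P, A.card = P.card ∧ A.sum = v := by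
  induction P using Multiset.induction generalizing v with
  | empty => exact ⟨0, zero_le, rfl, by simpa [eq_comm] using hv⟩
  | cons p P ih =>
    rw [pairSumset_cons, Finset.mem_add] at hv
    obtain ⟨a, ha, w, hw, rfl⟩ := hv
    obtain ⟨A, hA, hcard, rfl⟩ := ih hw
    refine ⟨a ::ₘ A, ?_, by simp [hcard], by simp⟩
    rw [pairTerms_cons]
    rcases Finset.mem_insert.1 ha with rfl | ha
    · exact Multiset.cons_le_cons _ (hA.trans (Multiset.le_cons_self _ _))
    · rw [Finset.mem_singleton.1 ha, Multiset.cons_swap]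
      exact Multiset.cons_le_cons _ (hA.trans (Multiset.le_cons_self _ _))

theorem exists_pairSumset_eq_vadd_of_card_le {P : Multiset (G × G)}
    (h : (pairSumset P).card ≤ P.card) :
    ∃ p Q, P = p ::ₘ Q ∧ pairSumset P = p.1 +ᵥ pairSumset Q := by
  induction P using Multiset.induction with
  | empty => simp at h
  | cons p P ih =>
    by_cases hp : (pairSumset (p ::ₘ P)).card ≤ (pairSumset P).card
    · refine ⟨p, P, rfl, ?_⟩
      rw [pairSumset_cons] at hp ⊢
      exact pair_add_eq_vadd_of_card_le hp (Finset.mem_insert_self _ _)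
    · rw [Multiset.card_cons] at h
      obtain ⟨q, Q, rfl, hq⟩ := ih (by lia)
      refine ⟨q, p ::ₘ Q, Multiset.cons_swap _ _ _, ?_⟩
      rw [pairSumset_cons, hq, pairSumset_cons, add_vadd_comm]

theorem card_add_card_le_card_add_pairSumset {Y : Finset G} {P : Multiset (G × G)}
    (hP : ∀ p ∈ P, p.1 - p.2 ∉ stabilizer G (Y + pairSumset P)) :
    Y.card + P.card ≤ (Y + pairSumset P).card := by
  induction P using Multiset.induction with
  | empty => simp
  | cons p P ih =>
    rw [pairSumset_cons, add_left_comm] at hP ⊢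
    have hle : stabilizer G (Y + pairSumset P) ≤
        stabilizer G ({p.1, p.2} + (Y + pairSumset P)) := by
      rw [add_comm {p.1, p.2}]
      exact stabilizer_le_stabilizer_add _ _
    have hrest := ih fun q hq hmem ↦ hP q (Multiset.mem_cons_of_mem hq) (hle hmem)
    have hgrow : (Y + pairSumset P).card < ({p.1, p.2} + (Y + pairSumset P)).card := by
      by_contra! hcard
      exact hP p (Multiset.mem_cons_self p P) (hle (sub_mem_stabilizer_of_card_pair_add_le hcard))
    rw [Multiset.card_cons]
    lia

theorem card_stabilizer_add_crossingNumber_le [Finite G] (P : Multiset (G × G)) :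
    Nat.card (stabilizer G (pairSumset P)) + crossingNumber (stabilizer G (pairSumset P)) P ≤
      (pairSumset P).card := by
  classical
  set L := stabilizer G (pairSumset P) with hL
  set C := P.filter fun p ↦ p.1 - p.2 ∉ L
  set N := P.filter fun p ↦ p.1 - p.2 ∈ L
  have hP : pairSumset N + pairSumset C = pairSumset P := by
    rw [← pairSumset_add, Multiset.filter_add_not]
  set K : Finset G := (Set.toFinite (L : Set G)).toFinset
  have hK : K + pairSumset N + pairSumset C = pairSumset P := by
    rw [add_assoc, hP, ← Finset.coe_inj, Finset.coe_add, Set.Finite.coe_toFinset, hL,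
      ← stabilizer_coe_finset, stabilizer_add_self]
  have hgrowth := card_add_card_le_card_add_pairSumset
    (Y := K + pairSumset N) (P := C)
    fun p hp ↦ by rw [hK]; exact (Multiset.mem_filter.1 hp).2
  have hKle : K.card ≤ (K + pairSumset N).card :=
    Finset.card_le_card_add_right (pairSumset_nonempty N)
  have hcard : Nat.card L = K.card := Nat.card_eq_card_finite_toFinset _
  have hC : crossingNumber L P = C.card := by
    simp only [crossingNumber, Multiset.countP_eq_card_filter, C]
    congr
  rw [hK] at hgrowth
  lia

/-- The potential maximised over all families of disjoint pairs: the size of the sumset, with ties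
broken by the number of pairs crossing the cosets of its stabilizer. -/
noncomputable def pairWeight (P : Multiset (G × G)) : ℕ ×ₗ ℕ :=
  toLex ((pairSumset P).card, crossingNumber (stabilizer G (pairSumset P)) P)

theorem exists_pairWeight_eq_of_card_le {P : Multiset (G × G)} (h : (pairSumset P).card ≤ P.card) :
    ∃ p Q, P = p ::ₘ Q ∧ pairWeight Q = pairWeight P := by
  obtain ⟨p, Q, rfl, hQ⟩ := exists_pairSumset_eq_vadd_of_card_le h
  refine ⟨p, Q, rfl, ?_⟩
  have hp : p.1 - p.2 ∈ stabilizer G (pairSumset Q) := by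
    apply sub_mem_stabilizer_of_card_pair_add_le
    rw [← pairSumset_cons, hQ, Finset.card_vadd_finset]
  rw [pairWeight, pairWeight, hQ, Finset.card_vadd_finset, stabilizer_vadd_eq_right,
    crossingNumber_cons_of_mem hp]

theorem pairWeight_lt_pairWeight_cons {p : G × G} {P : Multiset (G × G)}
    (hp : p.1 - p.2 ∉ stabilizer G (pairSumset P)) : pairWeight P < pairWeight (p ::ₘ P) := by
  refine Prod.Lex.toLex_lt_toLex.2 (.inl ?_)
  by_contra! hcard
  rw [pairSumset_cons] at hcard
  exact hp (sub_mem_stabilizer_of_card_pair_add_le hcard)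

theorem pairWeight_cons_lt_pairWeight_cons_cons {y w z : G} {P : Multiset (G × G)}
    (hy : y - z ∉ stabilizer G (pairSumset ((y, w) ::ₘ P)))
    (hw : w - z ∉ stabilizer G (pairSumset ((y, w) ::ₘ P))) :
    pairWeight ((y, w) ::ₘ P) < pairWeight ((y, z) ::ₘ (w, z) ::ₘ P) := by
  set X := pairSumset ((y, w) ::ₘ P) with hX
  set Q := (y, z) ::ₘ (w, z) ::ₘ P with hQ
  have hsub : z +ᵥ X ⊆ pairSumset Q := by
    have hpair : z +ᵥ ({y, w} : Finset G) ⊆ {y, z} + {w, z} := by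
      intro a
      simp only [Finset.mem_vadd_finset, Finset.mem_add, Finset.mem_insert, Finset.mem_singleton]
      rintro ⟨b, rfl | rfl, rfl⟩
      · exact ⟨b, .inl rfl, z, .inr rfl, add_comm b z⟩
      · exact ⟨z, .inr rfl, b, .inl rfl, rfl⟩
    rw [hX, hQ, pairSumset_cons, pairSumset_cons, pairSumset_cons, ← add_assoc, ← vadd_add_assoc]
    exact Finset.add_subset_add_right hpair
  refine Prod.Lex.toLex_lt_toLex'.2 ⟨?_, fun (hcard : X.card = _) ↦ ?_⟩
  · exact (Finset.card_vadd_finset z X).symm.trans_le (Finset.card_le_card hsub)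
  · have hstab : stabilizer G (pairSumset Q) = stabilizer G X := by
      rw [← Finset.eq_of_subset_of_card_le hsub (by rw [Finset.card_vadd_finset, hcard]),
        stabilizer_vadd_eq_right]
    change crossingNumber (stabilizer G X) ((y, w) ::ₘ P) <
      crossingNumber (stabilizer G (pairSumset Q)) Q
    rw [hstab, hQ, crossingNumber_cons_of_notMem (p := (y, z)) hy,
      crossingNumber_cons_of_notMem (p := (w, z)) hw]
    by_cases hyw : y - w ∈ stabilizer G X
    · rw [crossingNumber_cons_of_mem hyw]
      lia
    · rw [crossingNumber_cons_of_notMem hyw]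
      lia

theorem exists_maximal_pairWeight {R : Multiset G} {k : ℕ}
    (hsmall : ∀ P, pairTerms P ≤ R → P.card ≤ k → (pairSumset P).card ≤ k) :
    ∃ P, pairTerms P ≤ R ∧ P.card < k ∧
      ∀ Q, pairTerms Q ≤ R → Q.card ≤ k → pairWeight Q ≤ pairWeight P := by
  let s := {P | pairTerms P ≤ R ∧ P.card ≤ k}
  have hfinite : (pairWeight '' s).Finite := by
    refine (((Set.finite_Iic k).prod (Set.finite_Iic k)).image toLex).subset ?_
    rintro _ ⟨P, ⟨hPR, hPk⟩, rfl⟩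
    exact Set.mem_image_of_mem toLex
      (Set.mk_mem_prod (hsmall P hPR hPk) ((crossingNumber_le_card _ P).trans hPk))
  obtain ⟨P, ⟨hPR, hPk⟩, hmax⟩ := Set.Finite.exists_maximalFor' pairWeight s hfinite
    ⟨0, by simp [s, pairTerms]⟩
  have hmax' (Q) (hQR : pairTerms Q ≤ R) (hQk : Q.card ≤ k) : pairWeight Q ≤ pairWeight P :=
    le_of_not_gt fun hlt ↦ hlt.not_ge (hmax ⟨hQR, hQk⟩ hlt.le)
  rcases hPk.lt_or_eq with hlt | rfl
  · exact ⟨P, hPR, hlt, hmax'⟩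
  · obtain ⟨p, Q, rfl, hQ⟩ := exists_pairWeight_eq_of_card_le (hsmall P hPR le_rfl)
    refine ⟨Q, ?_, by simp, hQ ▸ hmax'⟩
    rw [pairTerms_cons] at hPR
    exact ((Multiset.le_cons_self _ _).trans (Multiset.le_cons_self _ _)).trans hPR

theorem outsideCount_le_crossingNumber_of_maximal {P : Multiset (G × G)} {T : Multiset G} {z : G}
    {k : ℕ} (hPk : P.card < k)
    (hmax : ∀ Q, pairTerms Q ≤ pairTerms P + z ::ₘ z ::ₘ T → Q.card ≤ k →
      pairWeight Q ≤ pairWeight P) :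
    outsideCount (stabilizer G (pairSumset P)) z (pairTerms P + z ::ₘ z ::ₘ T) ≤
      crossingNumber (stabilizer G (pairSumset P)) P := by
  set L := stabilizer G (pairSumset P)
  have hrest : ∀ x ∈ T, x - z ∈ L := by
    intro x hx
    by_contra hxz
    obtain ⟨T, rfl⟩ := Multiset.exists_cons_of_mem hx
    refine (pairWeight_lt_pairWeight_cons (p := (x, z)) hxz).not_ge (hmax _ ?_ (by simpa using hPk))
    refine Multiset.le_iff_exists_add.2 ⟨z ::ₘ T, ?_⟩
    rw [pairTerms_cons]
    simp only [← Multiset.singleton_add]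
    abel
  have hpairs : ∀ p ∈ P, p.1 - z ∈ L ∨ p.2 - z ∈ L := by
    rintro ⟨y, w⟩ hp
    obtain ⟨P, rfl⟩ := Multiset.exists_cons_of_mem hp
    by_contra! hyw
    refine (pairWeight_cons_lt_pairWeight_cons_cons hyw.1 hyw.2).not_ge
      (hmax _ ?_ (by simpa using hPk))
    refine Multiset.le_iff_exists_add.2 ⟨T, ?_⟩
    rw [pairTerms_cons, pairTerms_cons, pairTerms_cons]
    simp only [← Multiset.singleton_add]
    abel
  have hcons : outsideCount L z (z ::ₘ z ::ₘ T) = 0 := by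
    simpa [outsideCount, Multiset.countP_eq_zero] using hrest
  rw [outsideCount_add, hcons, add_zero]
  exact outsideCount_pairTerms_le L hpairs

theorem exists_lt_card_pairSumset [Finite G] {R : Multiset G} {k : ℕ}
    (hR : Nat.card G + 2 * k ≤ R.card)
    (hcoset : ∀ (K : AddSubgroup G) (c : G), k < Nat.card K + outsideCount K c R) :
    ∃ P, pairTerms P ≤ R ∧ P.card ≤ k ∧ k < (pairSumset P).card := by
  by_contra! hsmall
  obtain ⟨P, hPR, hPk, hmax⟩ := exists_maximal_pairWeight hsmall
  obtain ⟨T, rfl⟩ := Multiset.le_iff_exists_add.1 hPR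
  rw [Multiset.card_add, card_pairTerms] at hR
  obtain ⟨z, T, rfl⟩ : ∃ z T', T = z ::ₘ z ::ₘ T' := by
    by_contra! hne
    have hTcard := card_le_natCard_of_nodup (Multiset.nodup_iff_ne_cons_cons.2 hne)
    lia
  refine (hcoset (stabilizer G (pairSumset P)) z).not_ge ?_
  calc
    _ ≤ Nat.card (stabilizer G (pairSumset P)) +
        crossingNumber (stabilizer G (pairSumset P)) P := by
      gcongr
      exact outsideCount_le_crossingNumber_of_maximal hPk hmax
    _ ≤ (pairSumset P).card := card_stabilizer_add_crossingNumber_le P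
    _ ≤ k := hsmall P hPR hPk.le

theorem exists_sum_sub_sum_mem_of_card_lt [Finite G] {R : Multiset G} {P : Multiset (G × G)} {n : ℕ}
    {D : Finset G} (hPR : pairTerms P ≤ R) (hPn : P.card ≤ n) (hR : 2 * n + P.card ≤ R.card)
    (hD : Nat.card G < (pairSumset P).card + D.card) :
    ∃ U V, U + V ≤ R ∧ U.card = n ∧ V.card = n ∧ U.sum - V.sum ∈ D := by
  have := Fintype.ofFinite G
  obtain ⟨T, rfl⟩ := Multiset.le_iff_exists_add.1 hPR
  rw [Multiset.card_add, card_pairTerms] at hR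
  obtain ⟨V, hV, hVcard⟩ := exists_le_card_eq_s17 (by lia : n ≤ T.card)
  obtain ⟨T, rfl⟩ := Multiset.le_iff_exists_add.1 hV
  rw [Multiset.card_add] at hR
  obtain ⟨W, hW, hWcard⟩ := exists_le_card_eq_s17 (by lia : n - P.card ≤ T.card)
  obtain ⟨a, ha⟩ := Finset.inter_nonempty_of_card_lt_card_add_card
    (Finset.subset_univ ((W.sum - V.sum) +ᵥ pairSumset P)) (Finset.subset_univ D)
    (by rwa [Finset.card_vadd_finset, Finset.card_univ, ← Nat.card_eq_fintype_card])
  obtain ⟨haP, haD⟩ := Finset.mem_inter.1 ha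
  obtain ⟨v, hv, rfl⟩ := Finset.mem_vadd_finset.1 haP
  obtain ⟨A, hA, hAcard, rfl⟩ := exists_le_pairTerms_of_mem_pairSumset hv
  refine ⟨A + W, V, ?_, ?_, hVcard, ?_⟩
  · rw [add_assoc, add_comm W]
    gcongr
  · rw [Multiset.card_add]
    lia
  · rw [Multiset.sum_add, add_sub_assoc, add_comm]
    exact haD

end PairSumset

theorem exists_le_sum_eq_zero_of_isAddCyclic {G : Type*} [AddCommGroup G] [Finite G] [IsAddCyclic G]
    {S : Multiset G} {t : ℕ} (hS : (t + 1) * Nat.card G ≤ S.card + 1) :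
    ∃ T ≤ S, T.card = t * Nat.card G ∧ T.sum = 0 := by
  induction t generalizing S with
  | zero => exact ⟨0, zero_le, by simp, rfl⟩
  | succ t ih =>
    have hpos : 0 < Nat.card G := Nat.card_pos
    let e : ZMod (Nat.card G) ≃+ G := zmodAddCyclicAddEquiv inferInstance
    obtain ⟨T, hT, hTcard, hTsum⟩ := ZMod.erdos_ginzburg_ziv_multiset (S.map e.symm)
      (by rw [Multiset.card_map]; lia)
    have hTS : T.map e ≤ S := by simpa using Multiset.map_le_map hT (f := e)
    obtain ⟨S, rfl⟩ := Multiset.le_iff_exists_add.1 hTS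
    rw [Multiset.card_add, Multiset.card_map, hTcard] at hS
    obtain ⟨U, hUS, hUcard, hUsum⟩ := ih (S := S) (by lia)
    refine ⟨T.map e + U, by gcongr, ?_, ?_⟩
    · rw [Multiset.card_add, Multiset.card_map, hTcard, hUcard]
      lia
    · rw [Multiset.sum_add, ← map_multiset_sum, hTsum, hUsum, map_zero, add_zero]

theorem exists_le_sum_eq_zero_of_outsideCount_le {G : Type*} [AddCommGroup G] [Finite G]
    {R : Multiset G} (K : AddSubgroup G) [IsAddCyclic K] {c : G} {t : ℕ}
    (hR : t * Nat.card G + Nat.card K + outsideCount K c R ≤ R.card + 1) :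
    ∃ T ≤ R, T.card = t * Nat.card G ∧ T.sum = 0 := by
  classical
  have hsplit : (R.filter fun x ↦ x - c ∈ K).card + outsideCount K c R = R.card := by
    rw [outsideCount, Multiset.countP_eq_card_filter, ← Multiset.card_add, Multiset.filter_add_not]
  obtain ⟨S, hS⟩ : ∃ S : Multiset K,
      S.map (fun x : K ↦ (x : G) + c) = R.filter fun x ↦ x - c ∈ K := by
    lift (R.filter fun x ↦ x - c ∈ K).map (· - c) to Multiset K with S hS
    · intro y hy
      obtain ⟨x, hx, rfl⟩ := Multiset.mem_map.1 hy
      exact (Multiset.mem_filter.1 hx).2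
    refine ⟨S, ?_⟩
    rw [← Function.comp_def (· + c), ← Multiset.map_map, hS, Multiset.map_map]
    simp
  rw [← hS, Multiset.card_map] at hsplit
  obtain ⟨T, hTS, hTcard, hTsum⟩ := exists_le_sum_eq_zero_of_isAddCyclic (S := S) (t := t * K.index)
    (by rw [add_mul, one_mul, mul_assoc, K.index_mul_card]; lia)
  rw [mul_assoc, K.index_mul_card] at hTcard
  refine ⟨T.map fun x : K ↦ (x : G) + c, ?_, by rw [Multiset.card_map, hTcard], ?_⟩
  · exact (Multiset.map_le_map hTS).trans (hS.trans_le (Multiset.filter_le _ _))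
  · have hval : (T.map fun x : K ↦ (x : G)).sum = 0 := by
      rw [← K.coe_subtype, ← map_multiset_sum, hTsum, map_zero]
    rw [Multiset.sum_map_add, hval, Multiset.map_const', Multiset.sum_replicate, hTcard, mul_smul,
      card_nsmul_eq_zero', smul_zero, add_zero]

section Balanced

variable {G : Type*} [AddCommGroup G]

/-- `R` and `F` split as `U + V` and `B + B'` in such a way that
`r (∑ U) * sr b₁ * r (∑ V) * sr b₁' * sr b₂ * sr b₂' * ⋯ = 1` in the dihedral group,
where `B = {b₁, b₂, …}` and `B' = {b₁', b₂', …}`. -/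
def IsBalanced (R F : Multiset G) : Prop :=
  ∃ U V B B', U + V = R ∧ B + B' = F ∧ B.card = B'.card ∧ U.sum + B'.sum = V.sum + B.sum

theorem IsBalanced.add {R R' F F' : Multiset G} (h : IsBalanced R F) (h' : IsBalanced R' F') :
    IsBalanced (R + R') (F + F') := by
  obtain ⟨U, V, B, C, rfl, rfl, hcard, hsum⟩ := h
  obtain ⟨U', V', B', C', rfl, rfl, hcard', hsum'⟩ := h'
  refine ⟨U + U', V + V', B + B', C + C', add_add_add_comm .., add_add_add_comm .., ?_, ?_⟩
  · simp only [Multiset.card_add, hcard, hcard']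
  · simp only [Multiset.sum_add]
    rw [add_add_add_comm, hsum, hsum', add_add_add_comm]

theorem isBalanced_zero : IsBalanced (0 : Multiset G) 0 :=
  ⟨0, 0, 0, 0, rfl, rfl, rfl, rfl⟩

theorem isBalanced_pair_left (x : G) : IsBalanced {x, x} 0 :=
  ⟨{x}, {x}, 0, 0, rfl, rfl, rfl, rfl⟩

theorem isBalanced_pair_right (b : G) : IsBalanced 0 {b, b} :=
  ⟨0, 0, {b}, {b}, rfl, rfl, rfl, rfl⟩

theorem isBalanced_add_pair {U V : Multiset G} {b b' : G} (h : U.sum - V.sum = b - b') :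
    IsBalanced (U + V) {b, b'} :=
  ⟨U, V, {b}, {b'}, rfl, rfl, rfl, by simpa [add_comm] using sub_eq_sub_iff_add_eq_add.1 h⟩

theorem exists_isBalanced_card_eq_four [Finite G] {R F : Multiset G} (hR : R.Nodup) (hF : F.Nodup)
    (h : Nat.card G < R.card * F.card) :
    ∃ R' ≤ R, ∃ F' ≤ F, IsBalanced R' F' ∧ R'.card = 2 ∧ F'.card = 2 := by
  classical
  have := Fintype.ofFinite G
  have hprod : (Finset.univ : Finset G).card < (R.toFinset ×ˢ F.toFinset).card := by
    rwa [Finset.card_product, Multiset.toFinset_card_of_nodup hR,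
      Multiset.toFinset_card_of_nodup hF, Finset.card_univ, ← Nat.card_eq_fintype_card]
  obtain ⟨⟨x, b⟩, hxb, ⟨x', b'⟩, hxb', hne, hsub⟩ :=
    Finset.exists_ne_map_eq_of_card_lt_of_maps_to (f := fun p ↦ p.1 - p.2) hprod
      fun p _ ↦ Finset.mem_coe.2 (Finset.mem_univ (p.1 - p.2))
  simp only [Finset.mem_product, Multiset.mem_toFinset] at hxb hxb'
  have hdiff : x - x' = b - b' := sub_eq_sub_iff_sub_eq_sub.1 hsub
  have hx : x ≠ x' := by
    rintro rfl
    exact hne (Prod.ext rfl (sub_right_inj.1 hsub))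
  have hb : b ≠ b' := by
    rintro rfl
    exact hne (Prod.ext (sub_left_inj.1 hsub) rfl)
  exact ⟨{x, x'}, pair_le_of_mem_of_ne hxb.1 hxb'.1 hx, {b, b'},
    pair_le_of_mem_of_ne hxb.2 hxb'.2 hb,
    isBalanced_add_pair (U := {x}) (V := {x'}) (by simpa using hdiff), rfl, rfl⟩

theorem exists_isBalanced_card_eq_two_or_four [Finite G] {R F : Multiset G}
    (h : Nat.card G + 2 ≤ R.card + F.card) :
    ∃ R' ≤ R, ∃ F' ≤ F, IsBalanced R' F' ∧
      (R'.card + F'.card = 2 ∨ R'.card + F'.card = 4 ∧ F' ≠ 0) := by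
  by_cases hR : R.Nodup
  · by_cases hF : F.Nodup
    · have hRcard := card_le_natCard_of_nodup hR
      have hFcard := card_le_natCard_of_nodup hF
      obtain ⟨R', hR', F', hF', hbal, hRtwo, hFtwo⟩ :=
        exists_isBalanced_card_eq_four hR hF (by nlinarith)
      exact ⟨R', hR', F', hF', hbal, .inr ⟨by lia, Multiset.card_pos.1 (by lia)⟩⟩
    · simp only [Multiset.nodup_iff_le, not_forall, not_not] at hF
      obtain ⟨b, hb⟩ := hF
      exact ⟨0, zero_le, _, hb, isBalanced_pair_right b, .inl rfl⟩
  · simp only [Multiset.nodup_iff_le, not_forall, not_not] at hR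
    obtain ⟨x, hx⟩ := hR
    exact ⟨_, hx, 0, zero_le, isBalanced_pair_left x, .inl rfl⟩

theorem exists_isBalanced_card_eq_two_mul_or [Finite G] {R F : Multiset G} {n : ℕ}
    (h : Nat.card G + 2 * n ≤ R.card + F.card) :
    ∃ R' ≤ R, ∃ F' ≤ F, IsBalanced R' F' ∧
      (R'.card + F'.card = 2 * n ∨ R'.card + F'.card = 2 * n + 2 ∧ F' ≠ 0) := by
  induction n with
  | zero => exact ⟨0, zero_le, 0, zero_le, isBalanced_zero, .inl rfl⟩
  | succ n ih =>
    obtain ⟨R₁, hR₁, F₁, hF₁, h₁, hcard₁ | ⟨hcard₁, _⟩⟩ := ih (by lia)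
    · obtain ⟨R, rfl⟩ := Multiset.le_iff_exists_add.1 hR₁
      obtain ⟨F, rfl⟩ := Multiset.le_iff_exists_add.1 hF₁
      simp only [Multiset.card_add] at h
      obtain ⟨R₂, hR₂, F₂, hF₂, h₂, hcard₂⟩ :=
        exists_isBalanced_card_eq_two_or_four (R := R) (F := F) (by lia)
      refine ⟨R₁ + R₂, by gcongr, F₁ + F₂, by gcongr, h₁.add h₂, ?_⟩
      simp only [Multiset.card_add]
      refine hcard₂.imp (fun h ↦ by lia) fun h ↦ ⟨by lia, fun h0 ↦ h.2 ?_⟩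
      exact (add_eq_zero.1 h0).2
    · exact ⟨R₁, hR₁, F₁, hF₁, h₁, .inl hcard₁⟩

theorem exists_isBalanced_of_not_nodup [Finite G] {R F : Multiset G}
    (h : 3 * Nat.card G ≤ R.card + F.card) (hF : ¬ F.Nodup) :
    ∃ R' ≤ R, ∃ F' ≤ F, F' ≠ 0 ∧ R'.card + F'.card = 2 * Nat.card G ∧ IsBalanced R' F' := by
  simp only [Multiset.nodup_iff_le, not_forall, not_not] at hF
  obtain ⟨b, (hb : {b, b} ≤ F)⟩ := hF
  obtain ⟨F, rfl⟩ := Multiset.le_iff_exists_add.1 hb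
  have hpos : 0 < Nat.card G := Nat.card_pos
  rw [Multiset.card_add, Multiset.card_pair] at h
  obtain ⟨R', hR', F', hF', hbal, hcard | ⟨hcard, hne⟩⟩ :=
    exists_isBalanced_card_eq_two_mul_or (R := R) (F := F) (n := Nat.card G - 1) (by lia)
  · refine ⟨0 + R', by rwa [zero_add], {b, b} + F', by gcongr, by simp, ?_,
      (isBalanced_pair_right b).add hbal⟩
    rw [zero_add, Multiset.card_add, Multiset.card_pair]
    lia
  · exact ⟨R', hR', F', hF'.trans (Multiset.le_add_left _ _), hne, by lia, hbal⟩

theorem exists_isBalanced_or_sum_eq_zero_of_nodup [Finite G] [IsAddCyclic G] {R F : Multiset G}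
    (h : 3 * Nat.card G ≤ R.card + F.card) (hF : F.Nodup) :
    (∃ T ≤ R, T.card = 2 * Nat.card G ∧ T.sum = 0) ∨
    ∃ R' ≤ R, ∃ F' ≤ F, F' ≠ 0 ∧ R'.card + F'.card = 2 * Nat.card G ∧ IsBalanced R' F' := by
  classical
  obtain ⟨n, hn⟩ := Nat.exists_eq_add_of_le (card_le_natCard_of_nodup hF)
  by_cases hcoset : ∃ (K : AddSubgroup G) (c : G), Nat.card K + outsideCount K c R ≤ n + 1
  · obtain ⟨K, c, hK⟩ := hcoset
    exact .inl (exists_le_sum_eq_zero_of_outsideCount_le K (c := c) (by lia))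
  push Not at hcoset
  have hn2 : n + 1 < Nat.card G := by
    simpa [outsideCount] using hcoset ⊤ 0
  obtain ⟨P, hPR, hPn, hPcard⟩ := exists_lt_card_pairSumset (k := n + 1) (by lia) hcoset
  obtain ⟨b', hb'⟩ := Multiset.card_pos_iff_exists_mem.1 (by lia : 0 < F.card)
  obtain ⟨F, rfl⟩ := Multiset.exists_cons_of_mem hb'
  obtain ⟨hb'F, hF⟩ := Multiset.nodup_cons.1 hF
  rw [Multiset.card_cons] at h hn
  let D : Finset G := F.toFinset.image (· - b')
  have hD : D.card = F.card := by
    rw [Finset.card_image_of_injective _ (sub_left_injective (b := b')),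
      Multiset.toFinset_card_of_nodup hF]
  obtain ⟨U, V, hUV, hU, hV, hUVD⟩ := exists_sum_sub_sum_mem_of_card_lt (n := Nat.card G - 1)
    (D := D) hPR (by lia) (by lia) (by lia)
  obtain ⟨b, hb, hbsum⟩ := Finset.mem_image.1 hUVD
  rw [Multiset.mem_toFinset] at hb
  have hne : b ≠ b' := fun h ↦ hb'F (h ▸ hb)
  refine .inr ⟨U + V, hUV, {b, b'},
    pair_le_of_mem_of_ne (Multiset.mem_cons_of_mem hb) (Multiset.mem_cons_self b' F) hne,
    Multiset.cons_ne_zero, ?_, isBalanced_add_pair hbsum.symm⟩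
  rw [Multiset.card_add, Multiset.card_pair, hU, hV]
  lia

theorem exists_isBalanced_or_sum_eq_zero [Finite G] [IsAddCyclic G] {R F : Multiset G}
    (h : 3 * Nat.card G ≤ R.card + F.card) :
    (∃ T ≤ R, T.card = 2 * Nat.card G ∧ T.sum = 0) ∨
    ∃ R' ≤ R, ∃ F' ≤ F, F' ≠ 0 ∧ R'.card + F'.card = 2 * Nat.card G ∧ IsBalanced R' F' := by
  by_cases hF : F.Nodup
  · exact exists_isBalanced_or_sum_eq_zero_of_nodup h hF
  · exact .inr (exists_isBalanced_of_not_nodup h hF)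

end Balanced

section ProductOne

/-- `g` is the product of the terms of `T` in some order. -/
def IsOrderedProd {M : Type*} [Monoid M] (T : Multiset M) (g : M) : Prop :=
  ∃ l : List M, (l : Multiset M) = T ∧ l.prod = g

theorem IsOrderedProd.add {M : Type*} [Monoid M] {S T : Multiset M} {g h : M}
    (hS : IsOrderedProd S g) (hT : IsOrderedProd T h) : IsOrderedProd (S + T) (g * h) := by
  obtain ⟨k, rfl, rfl⟩ := hS
  obtain ⟨l, rfl, rfl⟩ := hT
  exact ⟨k ++ l, rfl, List.prod_append⟩

theorem isOrderedProd_singleton {M : Type*} [Monoid M] (g : M) : IsOrderedProd {g} g :=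
  ⟨[g], rfl, List.prod_singleton⟩

theorem HasProdOneSubseqOfLen.mono {G : Type*} [Group G] {S T : Multiset G} {n : ℕ} (hST : S ≤ T)
    (hS : HasProdOneSubseqOfLen S n) : HasProdOneSubseqOfLen T n := by
  obtain ⟨U, hU, hU'⟩ := hS
  exact ⟨U, hU.trans hST, hU'⟩

theorem EGZconst_eq_of_card_add_one_eq {G : Type*} [Group G] {S : Multiset G} {n : ℕ}
    (hS : S.card + 1 = n) (hnot : ¬ HasProdOneSubseqOfLen S (Nat.card G))
    (hforall : ∀ T : Multiset G, T.card = n → HasProdOneSubseqOfLen T (Nat.card G)) :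
    EGZconst G = n := by
  refine le_antisymm (Nat.sInf_le hforall) (le_csInf ⟨n, hforall⟩ fun t ht ↦ ?_)
  by_contra! hlt
  obtain ⟨T, hT, hTcard⟩ := exists_le_card_eq_s17 (by lia : t ≤ S.card)
  exact hnot ((ht T hTcard).mono hT)

end ProductOne

section Dihedral

open DihedralGroup

variable {m : ℕ}

theorem isOrderedProd_map_r (U : Multiset (ZMod m)) : IsOrderedProd (U.map r) (r U.sum) := by
  induction U using Multiset.induction with
  | empty => exact ⟨[], rfl, rfl⟩
  | cons a U ih =>
    rw [Multiset.map_cons, Multiset.sum_cons, ← r_mul_r, ← Multiset.singleton_add]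
    exact (isOrderedProd_singleton _).add ih

theorem isOrderedProd_map_sr_add_map_sr {B C : Multiset (ZMod m)} (h : B.card = C.card) :
    IsOrderedProd (B.map sr + C.map sr) (r (C.sum - B.sum)) := by
  induction B using Multiset.induction generalizing C with
  | empty =>
    obtain rfl := Multiset.card_eq_zero.1 h.symm
    exact ⟨[], rfl, by simp⟩
  | cons b B ih =>
    have hC : 0 < C.card := h ▸ Multiset.card_cons b B ▸ Nat.succ_pos _
    obtain ⟨c, hc⟩ := Multiset.card_pos_iff_exists_mem.1 hC
    obtain ⟨C, rfl⟩ := Multiset.exists_cons_of_mem hc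
    rw [Multiset.card_cons, Multiset.card_cons, add_left_inj] at h
    have hprod := ((isOrderedProd_singleton (sr b)).add (isOrderedProd_singleton (sr c))).add (ih h)
    rw [sr_mul_sr, r_mul_r, sub_add_sub_comm, add_add_add_comm] at hprod
    simpa only [Multiset.map_cons, Multiset.sum_cons, Multiset.singleton_add] using hprod

theorem isProdOne_map_r {T : Multiset (ZMod m)} (hT : T.sum = 0) : IsProdOne (T.map r) := by
  have h := isOrderedProd_map_r T
  rwa [hT, r_zero] at h

theorem isProdOne_of_isBalanced {R F : Multiset (ZMod m)} (h : IsBalanced R F) (hF : F ≠ 0) :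
    IsProdOne (R.map r + F.map sr) := by
  obtain ⟨U, V, B, C, rfl, rfl, hcard, hsum⟩ := h
  rw [← Multiset.card_pos, Multiset.card_add] at hF
  obtain ⟨b, hb⟩ := Multiset.card_pos_iff_exists_mem.1 (by lia : 0 < B.card)
  obtain ⟨c, hc⟩ := Multiset.card_pos_iff_exists_mem.1 (by lia : 0 < C.card)
  obtain ⟨B, rfl⟩ := Multiset.exists_cons_of_mem hb
  obtain ⟨C, rfl⟩ := Multiset.exists_cons_of_mem hc
  rw [Multiset.card_cons, Multiset.card_cons, add_left_inj] at hcard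
  rw [Multiset.sum_cons, Multiset.sum_cons] at hsum
  have hprod := ((((isOrderedProd_map_r U).add (isOrderedProd_singleton (sr b))).add
    (isOrderedProd_map_r V)).add (isOrderedProd_singleton (sr c))).add
    (isOrderedProd_map_sr_add_map_sr hcard)
  have hone : r U.sum * sr b * r V.sum * sr c * r (C.sum - B.sum) = 1 := by
    rw [r_mul_sr, sr_mul_r, sr_mul_sr, r_mul_r, ← r_zero]
    congr 1
    linear_combination hsum
  rw [hone] at hprod
  obtain ⟨l, hl, hlprod⟩ := hprod
  refine ⟨l, ?_, hlprod⟩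
  rw [hl]
  simp only [Multiset.map_add, Multiset.map_cons, ← Multiset.singleton_add (sr _)]
  abel

theorem exists_eq_map_r_add_map_sr (S : Multiset (DihedralGroup m)) :
    ∃ R F : Multiset (ZMod m), S = R.map r + F.map sr := by
  induction S using Multiset.induction with
  | empty => exact ⟨0, 0, rfl⟩
  | cons g S ih =>
    obtain ⟨R, F, rfl⟩ := ih
    cases g with
    | r i => exact ⟨i ::ₘ R, F, by simp⟩
    | sr i => exact ⟨R, i ::ₘ F, by simp⟩

theorem hasProdOneSubseqOfLen_of_three_mul_le_card [NeZero m] {S : Multiset (DihedralGroup m)}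
    (hS : 3 * m ≤ S.card) : HasProdOneSubseqOfLen S (2 * m) := by
  obtain ⟨R, F, rfl⟩ := exists_eq_map_r_add_map_sr S
  have hRF : 3 * Nat.card (ZMod m) ≤ R.card + F.card := by simpa using hS
  obtain ⟨T, hT, hTcard, hTsum⟩ | ⟨R', hR', F', hF', hne, hcard, hbal⟩ :=
    exists_isBalanced_or_sum_eq_zero hRF
  · exact ⟨T.map r, (Multiset.map_le_map hT).trans (Multiset.le_add_right _ _),
      by simpa using hTcard, isProdOne_map_r hTsum⟩
  · exact ⟨R'.map r + F'.map sr, add_le_add (Multiset.map_le_map hR') (Multiset.map_le_map hF'),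
      by simpa using hcard, isProdOne_of_isBalanced hbal hne⟩

/-- The homomorphism with value `1` on rotations and `-1` on reflections. -/
def reflectionSign : DihedralGroup m →* ℤˣ where
  toFun
    | r _ => 1
    | sr _ => -1
  map_one' := rfl
  map_mul' := by rintro (i | i) (j | j) <;> rfl

/-- A sequence of length `3m - 1` witnessing the lower bound `3m ≤ E(D_{2m})`. -/
def extremalSeq (m : ℕ) : Multiset (DihedralGroup m) :=
  Multiset.replicate (2 * m - 1) 1 + Multiset.replicate (m - 1) (r 1) + {sr 0}

theorem dihedral_r_one_ne_one (hm : m ≠ 1) : (r 1 : DihedralGroup m) ≠ 1 := by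
  rwa [Ne, ← orderOf_eq_one_iff, orderOf_r_one]

theorem mem_extremalSeq (hm : 2 ≤ m) {g : DihedralGroup m} :
    g ∈ extremalSeq m ↔ g = 1 ∨ g = r 1 ∨ g = sr 0 := by
  simp only [extremalSeq, Multiset.mem_add, Multiset.mem_replicate, Multiset.mem_singleton,
    or_assoc, (by lia : 2 * m - 1 ≠ 0), (by lia : m - 1 ≠ 0), ne_eq, not_false_eq_true, true_and]

theorem count_one_extremalSeq (hm : m ≠ 1) : (extremalSeq m).count 1 = 2 * m - 1 := by
  have hsr : (1 : DihedralGroup m) ≠ sr 0 := nofun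
  simp [extremalSeq, Multiset.count_replicate, dihedral_r_one_ne_one hm, hsr]

theorem count_r_one_extremalSeq (hm : m ≠ 1) : (extremalSeq m).count (r 1) = m - 1 := by
  simp [extremalSeq, Multiset.count_replicate, (dihedral_r_one_ne_one hm).symm]

theorem count_sr_zero_extremalSeq : (extremalSeq m).count (sr 0) = 1 := by
  have hone : (1 : DihedralGroup m) ≠ sr 0 := nofun
  simp [extremalSeq, Multiset.count_replicate, hone]

theorem count_sr_zero_eq_zero {l : List (DihedralGroup m)}
    (hmem : ∀ g ∈ l, g = 1 ∨ g = r 1 ∨ g = sr 0) (hcount : l.count (sr 0) ≤ 1)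
    (hprod : l.prod = 1) : l.count (sr 0) = 0 := by
  have hsign : (-1 : ℤˣ) ^ l.count (sr 0) = 1 := calc
    (-1 : ℤˣ) ^ l.count (sr 0) = (l.map reflectionSign).prod := by
      refine (List.prod_map_eq_pow_single (sr 0) reflectionSign fun g hne hg ↦ ?_).symm
      obtain rfl | rfl | rfl := hmem g hg
      · rfl
      · rfl
      · exact absurd rfl hne
    _ = 1 := by rw [← map_list_prod, hprod, map_one]
  interval_cases l.count (sr 0)
  · rfl
  · exact absurd hsign (by decide)

theorem count_r_one_eq_zero {l : List (DihedralGroup m)} (hmem : ∀ g ∈ l, g = 1 ∨ g = r 1)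
    (hcount : l.count (r 1) < m) (hprod : l.prod = 1) : l.count (r 1) = 0 := by
  have hpow : (r 1 : DihedralGroup m) ^ l.count (r 1) = 1 := by
    rw [← List.prod_eq_pow_single (r 1) fun g hne hg ↦ (hmem g hg).resolve_right hne, hprod]
  rw [← orderOf_dvd_iff_pow_eq_one, orderOf_r_one] at hpow
  exact Nat.eq_zero_of_dvd_of_lt hpow hcount

theorem not_hasProdOneSubseqOfLen_extremalSeq (hm : 2 ≤ m) :
    ¬ HasProdOneSubseqOfLen (extremalSeq m) (2 * m) := by
  rintro ⟨_, hle, hcard, l, rfl, hprod⟩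
  have hcount (g) : l.count g ≤ (extremalSeq m).count g := by
    simpa only [Multiset.coe_count] using Multiset.count_le_of_le g hle
  have hmem : ∀ g ∈ l, g = 1 ∨ g = r 1 ∨ g = sr 0 := fun g hg ↦
    (mem_extremalSeq hm).1 (Multiset.mem_of_le hle hg)
  have hsr : sr 0 ∉ l := List.count_eq_zero.1 <|
    count_sr_zero_eq_zero hmem ((hcount _).trans_eq count_sr_zero_extremalSeq) hprod
  have hrot : ∀ g ∈ l, g = 1 ∨ g = r 1 := fun g hg ↦
    (hmem g hg).imp_right fun h ↦ h.resolve_right (ne_of_mem_of_not_mem hg hsr)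
  have hr : r 1 ∉ l := List.count_eq_zero.1 <| count_r_one_eq_zero hrot
    ((hcount _).trans_lt (by rw [count_r_one_extremalSeq (by lia)]; lia)) hprod
  have hone : ∀ g ∈ l, 1 = g := fun g hg ↦
    ((hrot g hg).resolve_right (ne_of_mem_of_not_mem hg hr)).symm
  have hlength : l.count 1 = 2 * m := (List.count_eq_length.2 hone).trans hcard
  have hcount_one := hcount 1
  rw [hlength, count_one_extremalSeq (by lia)] at hcount_one
  lia

theorem card_extremalSeq_add_one (hm : m ≠ 0) : (extremalSeq m).card + 1 = 3 * m := by
  simp only [extremalSeq, Multiset.card_add, Multiset.card_replicate, Multiset.card_singleton]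
  lia

end Dihedral

/-- For the dihedral group of order `2m` (`m ≥ 2`), `E(D_{2m}) = 3m`. -/
theorem EGZconst_dihedral (m : ℕ) (hm : 2 ≤ m) :
    EGZconst (DihedralGroup m) = 3 * m := by
  have : NeZero m := ⟨by lia⟩
  refine EGZconst_eq_of_card_add_one_eq (card_extremalSeq_add_one (NeZero.ne m)) ?_ ?_
  · rw [DihedralGroup.nat_card]
    exact not_hasProdOneSubseqOfLen_extremalSeq hm
  · intro S hS
    rw [DihedralGroup.nat_card]
    exact hasProdOneSubseqOfLen_of_three_mul_le_card hS.ge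
end
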